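/- arXiv:1701.01849 — 6 statements merged into one kernel-verified Lean document; each statement's English description precedes it below -/
import Mathlib

section
/- Geometric characterization of q-rank: for a cubic form f on V and a natural number r, qrank(f) ≤ r if and only if there exists a linear subspace W ⊆ V of codimension at most r (i.e. the quotient V/W has dimension at most r) such that f(w) = 0 for all w ∈ W. -/
open scoped BigOperators

/-- The q-rank of a function `f : V → k`: the least `r` such that
`f = ∑ i in Fin r, ℓᵢ · qᵢ` with `ℓᵢ` linear functionals and `qᵢ` quadratic forms,
as an element of `ℕ∞` (`⊤` if no such expression exists). -/
noncomputable def qrank (k : Type*) [Field k] {V : Type*} [AddCommGroup V] [Module k V]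
    (f : V → k) : ℕ∞ :=
  sInf {r : ℕ∞ | ∃ m : ℕ, r = m ∧
    ∃ (ℓ : Fin m → (V →ₗ[k] k)) (q : Fin m → QuadraticForm k V),
      ∀ v, f v = ∑ i, ℓ i v * q i v}

/-- `f : V → k` is a cubic form: `f v = T (v,v,v)` for a symmetric trilinear map `T`. -/
def IsCubicForm (k : Type*) [Field k] {V : Type*} [AddCommGroup V] [Module k V]
    (f : V → k) : Prop :=
  ∃ T : V →ₗ[k] V →ₗ[k] V →ₗ[k] k,
    (∀ x y z, T x y z = T y x z) ∧ (∀ x y z, T x y z = T x z y) ∧ ∀ v, f v = T v v v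

/-- Geometric characterization of q-rank:  iff  vanishes on a
subspace of codimension at most . -/
theorem qrank_le_iff_vanishes_on_codim {k : Type*} [Field k] [IsAlgClosed k]
    (h2 : (2 : k) ≠ 0) (h3 : (3 : k) ≠ 0)
    {V : Type*} [AddCommGroup V] [Module k V] (f : V → k)
    (hf : IsCubicForm k f) (r : ℕ) :
    qrank k f ≤ r ↔
      ∃ W : Submodule k V, Module.rank k (V ⧸ W) ≤ r ∧ ∀ w ∈ W, f w = 0 := by
  obtain ⟨T, hs1, hs2, hT⟩ := hf
  constructor
  · intro h
    have hne : {r : ℕ∞ | ∃ m : ℕ, r = m ∧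
        ∃ (ℓ : Fin m → (V →ₗ[k] k)) (q : Fin m → QuadraticForm k V),
          ∀ v, f v = ∑ i, ℓ i v * q i v}.Nonempty := by
      by_contra hc
      rw [Set.not_nonempty_iff_eq_empty] at hc
      unfold qrank at h
      rw [hc] at h
      simp at h
    obtain ⟨m, hm, ℓ, q, hq⟩ := csInf_mem hne
    have hmr : m ≤ r := by
      have h' := h
      unfold qrank at h'
      rw [hm] at h'
      exact_mod_cast h'
    refine ⟨LinearMap.ker (LinearMap.pi ℓ), ?_, ?_⟩
    · have h1 := (LinearMap.quotKerEquivRange (LinearMap.pi ℓ)).lift_rank_eq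
      have h3 : Module.rank k (LinearMap.range (LinearMap.pi ℓ)) ≤ (m : Cardinal) := by
        refine (Submodule.rank_le _).trans ?_
        simp
      have h4 : Cardinal.lift (Module.rank k (V ⧸ LinearMap.ker (LinearMap.pi ℓ)))
          ≤ ((r : ℕ) : Cardinal) := by
        rw [h1]
        refine (Cardinal.lift_le.mpr h3).trans ?_
        simpa using hmr
      simpa using h4
    · intro w hw
      rw [hq w]
      refine Finset.sum_eq_zero fun i _ => ?_
      have : ℓ i w = 0 := congrFun (LinearMap.mem_ker.mp hw) i
      simp [this]
  · rintro ⟨W, hW, hfW⟩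
    have hfin : Module.Finite k (V ⧸ W) := by
      rw [← Module.rank_lt_aleph0_iff]
      exact hW.trans_lt (Cardinal.natCast_lt_aleph0)
    have hm : Module.finrank k (V ⧸ W) ≤ r := Module.finrank_le_of_rank_le hW
    let b := Module.finBasis k (V ⧸ W)
    obtain ⟨g, hg⟩ := W.mkQ.exists_rightInverse_of_surjective (by simp)
    let p : V →ₗ[k] V := LinearMap.id - g.comp W.mkQ
    have hp : ∀ v, p v ∈ W := by
      intro v
      have := LinearMap.congr_fun hg (W.mkQ v)
      rw [← Submodule.ker_mkQ W, LinearMap.mem_ker]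
      simp only [p, LinearMap.sub_apply, map_sub, LinearMap.comp_apply, LinearMap.id_apply] at this ⊢
      rw [this, sub_self]
    have hv : ∀ v, v - p v = ∑ i, b.repr (W.mkQ v) i • g (b i) := by
      intro v
      have := congrArg g (b.sum_repr (W.mkQ v))
      rw [map_sum] at this
      simp only [map_smul] at this
      rw [this]
      simp [p]
    refine le_trans (sInf_le ⟨Module.finrank k (V ⧸ W), rfl,
      fun i => (b.coord i).comp W.mkQ,
      fun i => LinearMap.BilinMap.toQuadraticMap
        (T (g (b i)) + (T (g (b i))).comp p + (T (g (b i))).compl₁₂ p p), ?_⟩)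
      (by exact_mod_cast hm)
    intro v
    have h0 : T (p v) (p v) (p v) = 0 := by rw [← hT]; exact hfW _ (hp v)
    have key : f v = T (v - p v) v v + T (v - p v) (p v) v + T (v - p v) (p v) (p v) := by
      rw [hT]
      simp only [map_sub, LinearMap.sub_apply]
      rw [h0, hs1 (p v) v v, hs2 v (p v) v,
        hs1 v (p v) (p v), hs2 (p v) v (p v)]
      ring
    rw [key, hv v]
    simp only [map_sum, map_smul, LinearMap.sum_apply, LinearMap.smul_apply, smul_eq_mul,
      ← Finset.sum_add_distrib]
    refine Finset.sum_congr rfl fun i _ => ?_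
    simp [LinearMap.BilinMap.toQuadraticMap_apply]
    ring
end

section
/- Q-rank over a directed union: suppose V = ⋃_{i ∈ I} V_i, where {V_i}_{i ∈ I} is a nonempty directed family of linear subspaces of V (for all i, j ∈ I there is m ∈ I with V_i ⊆ V_m and V_j ⊆ V_m, and the supremum of the V_i is all of V). Then for every cubic form f on V, qrank(f) = sup_{i ∈ I} qrank(f|_{V_i}) in ℕ ∪ {∞}. -/
open scoped BigOperators

lemma qr_exists_hom (k : Type*) [Field k] [IsAlgClosed k] (S : Type*) [CommRing S] [Nontrivial S]
    [Algebra k S] [Algebra.FiniteType k S] : Nonempty (S →ₐ[k] k) := by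
  obtain ⟨m, hm⟩ := Ideal.exists_maximal S
  let : Field (S ⧸ m) := Ideal.Quotient.field m
  have : Algebra.FiniteType k (S ⧸ m) :=
    Algebra.FiniteType.of_surjective (Ideal.Quotient.mkₐ k m) (Ideal.Quotient.mkₐ_surjective k m)
  have : Module.Finite k (S ⧸ m) := finite_of_finite_type_of_isJacobsonRing k (S ⧸ m)
  exact ⟨(IsAlgClosed.lift (R := k) (S := S ⧸ m) (M := k)).comp (Ideal.Quotient.mkₐ k m)⟩

lemma qr_max (k K : Type*) [Field k] [Field K] [Algebra k K] :
    ∃ G : Subalgebra k (K × k), Maximal (fun G : Subalgebra k (K × k) => ∀ c, ((0 : K), c) ∈ G → c = 0) G := by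
  obtain ⟨G, -, h⟩ := zorn_le_nonempty₀ {G : Subalgebra k (K × k) | ∀ c, ((0 : K), c) ∈ G → c = 0} (by
    intro C hC hchain y hy
    refine ⟨sSup C, ?_, fun z hz => le_sSup hz⟩
    intro c hc
    have : DirectedOn (· ≤ ·) C := hchain.directedOn
    have hne : Nonempty C := ⟨⟨y, hy⟩⟩
    rw [← SetLike.mem_coe, sSup_eq_iSup', Subalgebra.coe_iSup_of_directed this.directed_val] at hc
    simp only [Set.mem_iUnion] at hc
    obtain ⟨z, hc⟩ := hc
    exact hC z.2 c hc) ⊥ (by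
    intro c hc
    obtain ⟨d, hd⟩ := Algebra.mem_bot.1 hc
    have h1 := congrArg Prod.fst hd
    have h2 := congrArg Prod.snd hd
    simp at h1 h2
    rw [← h2, h1])
  exact ⟨G, h⟩

lemma qr_place (k K : Type*) [Field k] [IsAlgClosed k] [Field K] [Algebra k K] :
    ∃ (G : Subalgebra k (K × k)) (B : ValuationSubring K),
      (∀ x ∈ B, ∃ c, (x, c) ∈ G) ∧ ∀ c, ((0 : K), c) ∈ G → c = 0 := by
  obtain ⟨G, hG⟩ := qr_max k K
  refine ⟨G, ?_⟩
  let A : Subring K := (G.map (AlgHom.fst k K k)).toSubring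
  let I : Ideal A :=
    { carrier := {a | ((a : K), (0 : k)) ∈ G}
      zero_mem' := G.zero_mem
      add_mem' := by
        intro a b ha hb
        simpa using G.add_mem ha hb
      smul_mem' := by
        rintro ⟨a, ha⟩ b hb
        obtain ⟨⟨a', c⟩, hc, rfl⟩ := ha
        simpa using G.mul_mem hc hb }
  have hI : I ≠ ⊤ := by
    intro h
    have h1 : (1 : A) ∈ I := by rw [h]; trivial
    have h1' : ((1 : K), (0 : k)) ∈ G := h1
    have := G.sub_mem G.one_mem h1'
    have e : (1 : K × k) - (1, 0) = (0, 1) := by ext <;> simp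
    rw [e] at this
    have h2 := hG.prop 1 this
    exact one_ne_zero h2
  obtain ⟨B, hAB, hB⟩ := I.image_subset_nonunits_valuationSubring hI
  have hGA : ∀ p ∈ G, p.1 ∈ B := fun p hp => hAB ⟨p, hp, rfl⟩
  refine ⟨B, ?_, hG.prop⟩
  intro x hx
  have hkB : ∀ c : k, algebraMap k K c ∈ B := fun c => hGA _ (G.algebraMap_mem c)
  let : Algebra k B := ((algebraMap k K).codRestrict B.toSubring hkB).toAlgebra
  let ρ : B →ₐ[k] IsLocalRing.ResidueField B := 
    { IsLocalRing.residue B with commutes' := fun c => rfl }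
  let S := Algebra.adjoin k {ρ ⟨x, hx⟩}
  have : Algebra.FiniteType k S := by
    rw [← Subalgebra.fg_iff_finiteType]
    exact ⟨{ρ ⟨x, hx⟩}, by simp [S]⟩
  obtain ⟨ψ⟩ := qr_exists_hom k S
  let G' : Subalgebra k (K × k) :=
    { carrier := {p | ∃ (h : p.1 ∈ B) (h2 : ρ ⟨p.1, h⟩ ∈ S), ψ ⟨_, h2⟩ = p.2}
      add_mem' := by
        rintro ⟨a, c⟩ ⟨b, d⟩ ⟨h1, h2, h3⟩ ⟨h1', h2', h3'⟩
        dsimp only at h1 h2 h3 h1' h2' h3'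
        have e : ρ ⟨a + b, B.add_mem _ _ h1 h1'⟩ = ρ ⟨a, h1⟩ + ρ ⟨b, h1'⟩ := by
          rw [← map_add]; rfl
        refine ⟨B.add_mem _ _ h1 h1', ?_, ?_⟩
        · show ρ ⟨a + b, _⟩ ∈ S
          rw [e]; exact S.add_mem h2 h2'
        · show ψ ⟨ρ ⟨a + b, _⟩, _⟩ = c + d
          rw [← h3, ← h3']
          refine Eq.trans ?_ (map_add ψ _ _)
          exact congrArg ψ (Subtype.ext e)
      mul_mem' := by
        rintro ⟨a, c⟩ ⟨b, d⟩ ⟨h1, h2, h3⟩ ⟨h1', h2', h3'⟩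
        dsimp only at h1 h2 h3 h1' h2' h3'
        have e : ρ ⟨a * b, B.mul_mem _ _ h1 h1'⟩ = ρ ⟨a, h1⟩ * ρ ⟨b, h1'⟩ := by
          rw [← map_mul]; rfl
        refine ⟨B.mul_mem _ _ h1 h1', ?_, ?_⟩
        · show ρ ⟨a * b, _⟩ ∈ S
          rw [e]; exact S.mul_mem h2 h2'
        · show ψ ⟨ρ ⟨a * b, _⟩, _⟩ = c * d
          rw [← h3, ← h3']
          refine Eq.trans ?_ (map_mul ψ _ _)
          exact congrArg ψ (Subtype.ext e)
      algebraMap_mem' := by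
        intro c
        have e : ρ ⟨algebraMap k K c, hkB c⟩ = algebraMap k _ c := ρ.commutes c
        refine ⟨hkB c, ?_, ?_⟩
        · show ρ ⟨algebraMap k K c, _⟩ ∈ S
          rw [e]; exact S.algebraMap_mem c
        · show ψ ⟨ρ ⟨algebraMap k K c, _⟩, _⟩ = c
          exact (congrArg ψ (Subtype.ext e)).trans (ψ.commutes c) }
  have hG' : ∀ c, ((0 : K), c) ∈ G' → c = 0 := by
    rintro c ⟨h1, h2, h3⟩
    dsimp only at h1 h2 h3
    rw [← h3]
    have : (⟨ρ ⟨0, h1⟩, h2⟩ : S) = 0 := Subtype.ext (map_zero ρ)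
    rw [this, map_zero]
  have hle : G ≤ G' := by
    rintro ⟨a, c⟩ hac
    have ha : a ∈ B := hGA _ hac
    have hm : (a - algebraMap k K c, (0 : k)) ∈ G := by
      simpa using G.sub_mem hac (G.algebraMap_mem c)
    have hn : a - algebraMap k K c ∈ B.nonunits :=
      hB ⟨⟨a - algebraMap k K c, ⟨_, hm, rfl⟩⟩, hm, rfl⟩
    have hz : ρ (⟨a, ha⟩ - algebraMap k B c) = 0 := by
      show IsLocalRing.residue B _ = 0
      rw [IsLocalRing.residue_eq_zero_iff]
      exact (ValuationSubring.coe_mem_nonunits_iff).1 hn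
    have e : ρ ⟨a, ha⟩ = algebraMap k _ c := by
      rw [map_sub, sub_eq_zero] at hz
      rw [hz]; exact ρ.commutes c
    refine ⟨ha, ?_, ?_⟩
    · show ρ ⟨a, _⟩ ∈ S
      rw [e]; exact S.algebraMap_mem c
    · show ψ ⟨ρ ⟨a, _⟩, _⟩ = c
      exact (congrArg ψ (Subtype.ext e)).trans (ψ.commutes c)
  have hx' : (x, ψ ⟨ρ ⟨x, hx⟩, Algebra.self_mem_adjoin_singleton k _⟩) ∈ G' :=
    ⟨hx, Algebra.self_mem_adjoin_singleton k _, rfl⟩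
  exact ⟨_, hG.le_of_ge hG' hle hx'⟩

/-- Ultraproduct form of the place. -/
lemma qr_bounded (k : Type*) [Field k] [IsAlgClosed k] {ι : Type*} (U : Ultrafilter ι) :
    ∃ H : Subalgebra k ((ι → k) × k),
      (∀ p ∈ H, (∀ᶠ s in (U : Filter ι), p.1 s = 0) → p.2 = 0) ∧
      ∀ (n : ℕ) (a : ι → Fin n → k), (∀ᶠ s in (U : Filter ι), a s ≠ 0) →
        ∃ j, ∃ c : Fin n → k, c j = 1 ∧ ∀ l, (fun s => (a s j)⁻¹ * a s l, c l) ∈ H := by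
  let θ : (ι → k) →+* (U : Filter ι).Germ k := Filter.Germ.coeRingHom (U : Filter ι)
  let : Algebra k ((U : Filter ι).Germ k) := (θ.comp (Pi.constRingHom ι k)).toAlgebra
  obtain ⟨G, B, hB, hG⟩ := qr_place k ((U : Filter ι).Germ k)
  let H : Subalgebra k ((ι → k) × k) :=
    { carrier := {p | (θ p.1, p.2) ∈ G}
      add_mem' := by
        intro p q hp hq
        simpa using G.add_mem hp hq
      mul_mem' := by
        intro p q hp hq
        simpa using G.mul_mem hp hq
      algebraMap_mem' := fun c => G.algebraMap_mem c }
  have hθ : ∀ x : ι → k, θ x = 0 ↔ ∀ᶠ s in (U : Filter ι), x s = 0 := fun x =>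
    Filter.Germ.coe_eq
  have hH0 : ∀ p ∈ H, (∀ᶠ s in (U : Filter ι), p.1 s = 0) → p.2 = 0 := by
    rintro ⟨x, c⟩ hp h
    have h' : (θ x, c) ∈ G := hp
    rw [(hθ x).2 h] at h'
    exact hG _ h'
  refine ⟨H, hH0, ?_⟩
  intro n a ha
  have hne : ∃ j, θ (fun s => a s j) ≠ 0 := by
    by_contra hcon
    push Not at hcon
    have : ∀ᶠ s in (U : Filter ι), ∀ j, a s j = 0 :=
      Filter.eventually_all.2 fun j => (hθ _).1 (hcon j)
    obtain ⟨s, h1, h2⟩ := (ha.and this).exists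
    exact h1 (funext h2)
  obtain ⟨j0, hj0⟩ := hne
  have : Nonempty (Fin n) := ⟨j0⟩
  obtain ⟨j, hj⟩ := Finite.exists_max (fun j => B.valuation (θ (fun s => a s j)))
  have hjne : θ (fun s => a s j) ≠ 0 := by
    intro h
    have := hj j0
    rw [h, map_zero, le_zero_iff, map_eq_zero] at this
    exact hj0 this
  have key : ∀ l, ∃ c, (fun s => (a s j)⁻¹ * a s l, c) ∈ H := by
    intro l
    have hinv : θ (fun s => (a s j)⁻¹ * a s l) = (θ (fun s => a s j))⁻¹ * θ (fun s => a s l) := rfl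
    refine hB (θ (fun s => (a s j)⁻¹ * a s l)) ?_
    rw [hinv, ← ValuationSubring.valuation_le_one_iff, map_mul, map_inv₀]
    rw [inv_mul_le_one₀]
    · exact hj l
    · rw [zero_lt_iff]
      exact (Valuation.ne_zero_iff _).2 hjne
  choose c hc using key
  refine ⟨j, c, ?_, hc⟩
  have h1 := hH0 _ (H.sub_mem (hc j) H.one_mem) (by
    have : ∀ᶠ s in (U : Filter ι), ¬ (a s j = 0) := by
      rw [Ultrafilter.eventually_not]
      exact fun h => hjne ((hθ _).2 h)
    filter_upwards [this] with s hs
    simp [hs])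
  simpa [sub_eq_zero] using h1

/-- Evaluation of a formal combination. -/
noncomputable def qrEval {k V H : Type*} [Field k] [AddCommGroup V] [Module k V] [CommRing H]
    [Algebra k H] (g : H →ₐ[k] k) : (V →₀ H) →ₗ[k] V :=
  Finsupp.lsum k (fun v => (LinearMap.toSpanSingleton k V v).comp g.toLinearMap)

lemma qrEval_apply {k V H : Type*} [Field k] [AddCommGroup V] [Module k V] [CommRing H]
    [Algebra k H] (g : H →ₐ[k] k) (a : V →₀ H) :
    qrEval g a = ∑ v ∈ a.support, g (a v) • v := by
  simp [qrEval, Finsupp.sum]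

lemma qr_cubic_eval {k V H : Type*} [Field k] [AddCommGroup V] [Module k V] [CommRing H]
    [Algebra k H] (T : V →ₗ[k] V →ₗ[k] V →ₗ[k] k) (a : V →₀ H) :
    ∃ x : H, ∀ g : H →ₐ[k] k, T (qrEval g a) (qrEval g a) (qrEval g a) = g x := by
  refine ⟨∑ w ∈ a.support, ∑ v ∈ a.support, ∑ u ∈ a.support, T u v w • (a u * a v * a w), ?_⟩
  intro g
  simp only [qrEval_apply, map_sum, LinearMap.sum_apply, map_smul, LinearMap.smul_apply, map_mul,
    smul_eq_mul, Finset.mul_sum]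
  refine Finset.sum_congr rfl fun u _ => Finset.sum_congr rfl fun v _ =>
    Finset.sum_congr rfl fun w _ => ?_
  ring

lemma qr_limit {k : Type*} [Field k] [IsAlgClosed k] {V : Type*} [AddCommGroup V] [Module k V]
    (T : V →ₗ[k] V →ₗ[k] V →ₗ[k] k) {ι : Type*} (U : Ultrafilter ι) (W : ι → Submodule k V)
    (hW : ∀ s, ∀ w ∈ W s, T w w w = 0) (n : ℕ)
    (hn : ∀ v : Fin n → V, ∀ᶠ s in (U : Filter ι), ∃ a : Fin n → k, a ≠ 0 ∧ ∑ j, a j • v j ∈ W s) :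
    ∃ W' : Submodule k V, (∀ w ∈ W', T w w w = 0) ∧
      ∀ v : Fin n → V, ∃ a : Fin n → k, a ≠ 0 ∧ ∑ j, a j • v j ∈ W' := by
  obtain ⟨H, hH0, hH⟩ := qr_bounded k U
  let ev : ι → (H →ₐ[k] k) := fun s =>
    ((Pi.evalAlgHom k (fun _ : ι => k) s).comp (AlgHom.fst k (ι → k) k)).comp H.val
  let φ : H →ₐ[k] k := (AlgHom.snd k (ι → k) k).comp H.val
  let N : Submodule k (V →₀ H) :=
    { carrier := {a | ∀ᶠ s in (U : Filter ι), qrEval (ev s) a ∈ W s}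
      zero_mem' := by
        refine Filter.Eventually.of_forall fun s => ?_
        rw [map_zero]; exact zero_mem _
      add_mem' := by
        intro a b ha hb
        filter_upwards [ha, hb] with s h1 h2
        rw [map_add]; exact add_mem h1 h2
      smul_mem' := by
        intro c a ha
        filter_upwards [ha] with s h1
        rw [map_smul]; exact Submodule.smul_mem _ _ h1 }
  refine ⟨N.map (qrEval φ), ?_, ?_⟩
  · rintro _ ⟨a, ha, rfl⟩
    obtain ⟨x, hx⟩ := qr_cubic_eval T a
    rw [hx]
    refine hH0 x x.2 ?_
    filter_upwards [ha] with s hs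
    have := hW s _ hs
    rw [hx] at this
    exact this
  · intro v
    have h1 : ∀ s, ∃ a : Fin n → k, (∃ a : Fin n → k, a ≠ 0 ∧ ∑ j, a j • v j ∈ W s) →
        a ≠ 0 ∧ ∑ j, a j • v j ∈ W s := by
      intro s
      by_cases h : ∃ a : Fin n → k, a ≠ 0 ∧ ∑ j, a j • v j ∈ W s
      · exact ⟨h.choose, fun _ => h.choose_spec⟩
      · exact ⟨0, fun h' => absurd h' h⟩
    choose a ha using h1
    obtain ⟨j, c, hcj, hc⟩ := hH n a ((hn v).mono fun s hs => (ha s hs).1)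
    refine ⟨c, fun h => by simp [h] at hcj, ?_⟩
    have hev : ∀ g : H →ₐ[k] k, qrEval g (∑ l, Finsupp.single (v l) (⟨_, hc l⟩ : H)) =
        ∑ l, g ⟨_, hc l⟩ • v l := by
      intro g
      rw [map_sum]
      refine Finset.sum_congr rfl fun l _ => ?_
      simp [qrEval]
    refine ⟨∑ l, Finsupp.single (v l) (⟨_, hc l⟩ : H), ?_, hev φ⟩
    show ∀ᶠ s in (U : Filter ι), _
    filter_upwards [hn v] with s hs
    rw [hev]
    have := (W s).smul_mem (a s j)⁻¹ (ha s hs).2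
    rw [Finset.smul_sum] at this
    simpa [ev, smul_smul] using this

lemma qr_of_subspace {k : Type*} [Field k] {V : Type*} [AddCommGroup V] [Module k V]
    (T : V →ₗ[k] V →ₗ[k] V →ₗ[k] k) (W : Submodule k V) (hW : ∀ w ∈ W, T w w w = 0) (r : ℕ)
    (h : ∀ v : Fin (r + 1) → V, ∃ a : Fin (r + 1) → k, a ≠ 0 ∧ ∑ j, a j • v j ∈ W) :
    qrank k (fun v => T v v v) ≤ r := by
  have hrank : Module.rank k (V ⧸ W) ≤ r := by
    apply rank_le
    intro s hs
    by_contra hcon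
    push Not at hcon
    obtain ⟨t, hts, ht⟩ := Finset.exists_subset_card_eq (Nat.succ_le_of_lt hcon)
    let e : Fin (r + 1) ≃ t := (t.equivFinOfCardEq ht).symm
    have hli : LinearIndependent k (fun j : Fin (r + 1) => ((e j : t) : V ⧸ W)) := by
      have := hs.comp (fun j : Fin (r + 1) => (⟨e j, hts (e j).2⟩ : s)) (by
        intro x y hxy
        apply e.injective
        apply Subtype.ext
        simpa using hxy)
      exact this
    choose v hv using fun j : Fin (r + 1) => W.mkQ_surjective ((e j : t) : V ⧸ W)
    obtain ⟨a, ha, hmem⟩ := h v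
    apply ha
    have h0 : ∑ j, a j • ((e j : t) : V ⧸ W) = 0 := by
      rw [← (Submodule.Quotient.mk_eq_zero W).2 hmem]
      show _ = W.mkQ _
      simp [map_sum, ← hv]
    exact funext (Fintype.linearIndependent_iff.1 hli a h0)
  have hfin : Module.Finite k (V ⧸ W) :=
    Module.rank_lt_aleph0_iff.1 (hrank.trans_lt (Cardinal.natCast_lt_aleph0))
  have hfr : Module.finrank k (V ⧸ W) ≤ r := by
    exact Module.finrank_le_of_rank_le hrank
  let b := Module.finBasis k (V ⧸ W)
  choose e he using fun j => W.mkQ_surjective (b j)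
  let ℓ : Fin (Module.finrank k (V ⧸ W)) → (V →ₗ[k] k) := fun j => (b.coord j).comp W.mkQ
  let p : V →ₗ[k] V := LinearMap.id - ∑ j, (ℓ j).smulRight (e j)
  have hp : ∀ v, p v ∈ W := by
    intro v
    rw [← Submodule.Quotient.mk_eq_zero W]
    show W.mkQ _ = 0
    have := b.sum_repr (W.mkQ v)
    simp only [p, LinearMap.sub_apply, LinearMap.id_apply, LinearMap.sum_apply,
      LinearMap.smulRight_apply, map_sub, map_sum, map_smul, he, sub_eq_zero]
    exact this.symm
  have hv : ∀ v, v = p v + ∑ j, ℓ j v • e j := by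
    intro v
    simp [p]
  let Q : Fin (Module.finrank k (V ⧸ W)) → QuadraticForm k V := fun j =>
    LinearMap.BilinMap.toQuadraticMap (T (e j)) +
    LinearMap.BilinMap.toQuadraticMap ((T.flip (e j)).comp p) +
    LinearMap.BilinMap.toQuadraticMap ((T.compr₂ (LinearMap.applyₗ (e j))).compl₁₂ p p)
  have hsum : ∀ v, T v v v = ∑ j, ℓ j v * Q j v := by
    intro v
    have h1 : T v v v = T (p v) v v + ∑ j, ℓ j v * T (e j) v v := by
      conv_lhs => rw [show T v = T (p v + ∑ j, ℓ j v • e j) by rw [← hv v]]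
      simp [LinearMap.sum_apply]
    have h2 : T (p v) v v = T (p v) (p v) v + ∑ j, ℓ j v * T (p v) (e j) v := by
      conv_lhs => rw [show T (p v) v = T (p v) (p v + ∑ j, ℓ j v • e j) by rw [← hv v]]
      simp [LinearMap.sum_apply]
    have h3 : T (p v) (p v) v = T (p v) (p v) (p v) + ∑ j, ℓ j v * T (p v) (p v) (e j) := by
      conv_lhs => rw [show T (p v) (p v) v = T (p v) (p v) (p v + ∑ j, ℓ j v • e j) by rw [← hv v]]
      simp
    rw [h1, h2, h3, hW _ (hp v), zero_add, ← Finset.sum_add_distrib, ← Finset.sum_add_distrib]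
    refine Finset.sum_congr rfl fun j _ => ?_
    simp [Q]
    ring
  refine le_trans (sInf_le ⟨_, rfl, ℓ, Q, hsum⟩) ?_
  exact_mod_cast hfr

lemma qr_subspace_of {k : Type*} [Field k] {V : Type*} [AddCommGroup V] [Module k V]
    (f : V → k) (r : ℕ) (h : qrank k f ≤ r) :
    ∃ W : Submodule k V, (∀ w ∈ W, f w = 0) ∧
      ∀ v : Fin (r + 1) → V, ∃ a : Fin (r + 1) → k, a ≠ 0 ∧ ∑ j, a j • v j ∈ W := by
  have hne : {r : ℕ∞ | ∃ m : ℕ, r = m ∧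
    ∃ (ℓ : Fin m → (V →ₗ[k] k)) (q : Fin m → QuadraticForm k V),
      ∀ v, f v = ∑ i, ℓ i v * q i v}.Nonempty := by
    by_contra hcon
    rw [Set.not_nonempty_iff_eq_empty] at hcon
    rw [qrank, hcon, sInf_empty] at h
    exact absurd h (by simp)
  obtain ⟨m, hm, ℓ, q, hf⟩ := csInf_mem hne
  have hmr : m ≤ r := by
    have : ((m : ℕ) : ℕ∞) ≤ r := by rw [← hm]; exact h
    exact_mod_cast this
  refine ⟨LinearMap.ker (LinearMap.pi ℓ), ?_, ?_⟩
  · intro w hw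
    rw [hf]
    refine Finset.sum_eq_zero fun i _ => ?_
    have : ℓ i w = 0 := congrFun (LinearMap.mem_ker.1 hw) i
    rw [this, zero_mul]
  · intro v
    have hnl : ¬ LinearIndependent k (fun j => LinearMap.pi ℓ (v j)) := by
      intro hli
      have := hli.fintype_card_le_finrank
      simp at this
      omega
    rw [Fintype.not_linearIndependent_iff] at hnl
    obtain ⟨a, ha, j, hj⟩ := hnl
    refine ⟨a, fun h => hj (by simp [h]), ?_⟩
    rw [LinearMap.mem_ker, map_sum]
    simpa only [map_smul] using ha

lemma qr_restrict {k : Type*} [Field k] {V : Type*} [AddCommGroup V] [Module k V]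
    (f : V → k) (W : Submodule k V) : qrank k (fun w : W => f w) ≤ qrank k f := by
  apply sInf_le_sInf
  rintro _ ⟨m, rfl, ℓ, q, h⟩
  exact ⟨m, rfl, fun i => (ℓ i).comp W.subtype, fun i => (q i).comp W.subtype, fun v => h v⟩

/-- Q-rank over a directed union of subspaces. -/
theorem qrank_directed_union {k : Type*} [Field k] [IsAlgClosed k]
    (h2 : (2 : k) ≠ 0) (h3 : (3 : k) ≠ 0)
    {V : Type*} [AddCommGroup V] [Module k V]
    {I : Type*} [Nonempty I] (𝒱 : I → Submodule k V)
    (hdir : Directed (· ≤ ·) 𝒱) (hsup : iSup 𝒱 = ⊤)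
    (f : V → k) (hf : IsCubicForm k f) :
    qrank k f = ⨆ i, qrank k (fun w : 𝒱 i => f w) := by
  obtain ⟨T, -, -, hT⟩ := hf
  obtain rfl : f = fun v => T v v v := funext hT
  refine le_antisymm ?_ (iSup_le fun i => qr_restrict _ _)
  rcases eq_or_ne (⨆ i, qrank k (fun w : 𝒱 i => T w w w)) ⊤ with htop | htop
  · rw [htop]; exact le_top
  obtain ⟨r, hr⟩ := ENat.ne_top_iff_exists.1 htop
  rw [← hr]
  have hle : ∀ i, qrank k (fun w : 𝒱 i => T w w w) ≤ r := fun i => by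
    rw [hr]; exact le_iSup (fun i => qrank k (fun w : 𝒱 i => T w w w)) i
  have hcov : ∀ s : Finset V, ∃ i, ∀ v ∈ s, v ∈ 𝒱 i := by
    intro s
    induction s using Finset.cons_induction with
    | empty => exact ⟨Classical.arbitrary I, by simp⟩
    | cons a s ha ih =>
      obtain ⟨i, hi⟩ := ih
      have : a ∈ iSup 𝒱 := by rw [hsup]; trivial
      obtain ⟨j, hj⟩ := (Submodule.mem_iSup_of_directed 𝒱 hdir).1 this
      obtain ⟨m, h1, h2⟩ := hdir i j
      refine ⟨m, fun v hv => ?_⟩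
      rcases Finset.mem_cons.1 hv with rfl | hv
      · exact h2 hj
      · exact h1 (hi v hv)
  have hex : ∀ s : Finset V, ∃ W : Submodule k V, (∀ w ∈ W, T w w w = 0) ∧
      ∀ v : Fin (r + 1) → V, (∀ j, v j ∈ s) →
        ∃ a : Fin (r + 1) → k, a ≠ 0 ∧ ∑ j, a j • v j ∈ W := by
    intro s
    obtain ⟨i, hi⟩ := hcov s
    obtain ⟨W, h1, h2⟩ := qr_subspace_of _ r (hle i)
    refine ⟨W.map (𝒱 i).subtype, ?_, ?_⟩
    · rintro _ ⟨w, hw, rfl⟩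
      exact h1 w hw
    · intro v hv
      obtain ⟨a, ha, hm⟩ := h2 (fun j => ⟨v j, hi _ (hv j)⟩)
      refine ⟨a, ha, _, hm, ?_⟩
      simp [map_sum]
  choose W hW hWv using hex
  classical
  obtain ⟨W', h1, h2⟩ := qr_limit T (Ultrafilter.of (Filter.atTop : Filter (Finset V))) W hW (r + 1)
    (by
      intro v
      apply Ultrafilter.of_le (Filter.atTop : Filter (Finset V))
      filter_upwards [Filter.eventually_ge_atTop (Finset.univ.image v)] with s hs
      exact hWv s v fun j => hs (Finset.mem_image_of_mem v (Finset.mem_univ j)))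
  exact qr_of_subspace T W' h1 r h2
end

section
/- Maxrank inequality: let V be a finite-dimensional k-vector space, and suppose the cubic form f on V has q-rank r and admits an expression f(v) = Σ_{i=1}^n ℓᵢ(v)·qᵢ(v) with ℓᵢ linear functionals and qᵢ quadratic forms on V. Let Q be the linear span of q₁,…,q_n inside the space of quadratic forms on V. Then for every linear subspace Q' ⊆ Q there exists q ∈ Q' with dim(Q/Q') + rank(q) ≥ r. -/
open scoped BigOperators

/-- The rank of a quadratic form: `dim V` minus the dimension of its radical
(the kernel of the polar bilinear form). -/
noncomputable def quadRank {k V : Type*} [Field k] [AddCommGroup V] [Module k V]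
    (q : QuadraticForm k V) : ℕ :=
  Module.finrank k V - Module.finrank k (LinearMap.ker (QuadraticMap.polarBilin q))

theorem mr_compl {k : Type*} [Field k] {V : Type*} [AddCommGroup V] [Module k V]
    [FiniteDimensional k V] (W : Submodule k V) :
    ∃ (e : Fin (Module.finrank k V - Module.finrank k W) → V)
      (x : Fin (Module.finrank k V - Module.finrank k W) → (V →ₗ[k] k)),
      (∀ v, v - ∑ j, x j v • e j ∈ W) ∧
      (∀ a : Fin (Module.finrank k V - Module.finrank k W) → k,
        ∑ j, a j • e j ∈ W → a = 0) := by
  have hd : Module.finrank k (V ⧸ W) = Module.finrank k V - Module.finrank k W := by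
    have := Submodule.finrank_quotient_add_finrank W
    omega
  let b := Module.finBasisOfFinrankEq k (V ⧸ W) hd
  choose e he using fun j => Submodule.mkQ_surjective W (b j)
  refine ⟨e, fun j => (b.coord j) ∘ₗ W.mkQ, ?_, ?_⟩
  · intro v
    rw [← Submodule.Quotient.mk_eq_zero, ← Submodule.mkQ_apply, map_sub, map_sum]
    simp only [map_smul, he]
    have := b.sum_repr (W.mkQ v)
    simp only [LinearMap.comp_apply, Module.Basis.coord_apply]
    rw [this, sub_self]
  · intro a ha
    rw [← Submodule.Quotient.mk_eq_zero, ← Submodule.mkQ_apply, map_sum] at ha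
    simp only [map_smul, he] at ha
    funext j
    exact (Fintype.linearIndependent_iff.1 b.linearIndependent) a ha j

theorem mr_qrank_le {k : Type*} [Field k] {V : Type*} [AddCommGroup V] [Module k V]
    {ι : Type*} [Fintype ι] (f : V → k) (l : ι → (V →ₗ[k] k)) (q : ι → QuadraticForm k V)
    (h : ∀ v, f v = ∑ i, l i v * q i v) : qrank k f ≤ (Fintype.card ι : ℕ∞) := by
  apply sInf_le
  refine ⟨Fintype.card ι, rfl, fun i => l ((Fintype.equivFin ι).symm i),
    fun i => q ((Fintype.equivFin ι).symm i), fun v => ?_⟩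
  rw [h v]
  exact ((Fintype.equivFin ι).symm.sum_comp (fun i => l i v * q i v)).symm

theorem mr_quadRank {k : Type*} [Field k] {V : Type*} [AddCommGroup V] [Module k V]
    [FiniteDimensional k V] (q : QuadraticForm k V) :
    quadRank q = Module.finrank k (LinearMap.range (QuadraticMap.polarBilin q)) := by
  have := LinearMap.finrank_range_add_finrank_ker (QuadraticMap.polarBilin q)
  unfold quadRank
  omega

theorem mr_card_le {k : Type*} [Field k] {V : Type*} [AddCommGroup V] [Module k V]
    [FiniteDimensional k V] {ι : Type*} [Fintype ι] [DecidableEq ι]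
    (L : V →ₗ[k] (V →ₗ[k] k)) (y w : ι → V) (N : Matrix ι ι k)
    (hNL : ∀ i j, N i j = L (y i) (w j)) (hdet : N.det ≠ 0) :
    Fintype.card ι ≤ Module.finrank k (LinearMap.range L) := by
  have hli : LinearIndependent k (fun i => L (y i)) := by
    refine Fintype.linearIndependent_iff.2 ?_
    intro g hg
    have : g = 0 := by
      by_contra hg0
      apply hdet
      refine Matrix.exists_vecMul_eq_zero_iff.1 ⟨g, hg0, ?_⟩
      funext j
      have h1 := LinearMap.congr_fun hg (w j)
      simpa [Matrix.vecMul, dotProduct, hNL] using h1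
    intro i
    rw [this]; rfl
  rw [← finrank_span_eq_card hli]
  apply Submodule.finrank_mono
  rw [Submodule.span_le]
  rintro _ ⟨i, rfl⟩
  exact LinearMap.mem_range_self L _

theorem mr_vanish {k : Type*} [Field k] [Infinite k] (h2 : (2 : k) ≠ 0)
    {V : Type*} [AddCommGroup V] [Module k V] [FiniteDimensional k V]
    (p p' : QuadraticForm k V) (hmax : ∀ t : k, quadRank (p + t • p') ≤ quadRank p)
    (u : V) (hu : u ∈ LinearMap.ker (QuadraticMap.polarBilin p)) : p' u = 0 := by
  classical
  obtain ⟨m, hmq, e, x, hx, hind⟩ : ∃ m : ℕ, quadRank p = m ∧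
      ∃ (e : Fin m → V) (x : Fin m → (V →ₗ[k] k)),
      (∀ v, v - ∑ j, x j v • e j ∈ LinearMap.ker (QuadraticMap.polarBilin p)) ∧
      (∀ a : Fin m → k,
        ∑ j, a j • e j ∈ LinearMap.ker (QuadraticMap.polarBilin p) → a = 0) :=
    ⟨_, rfl, mr_compl _⟩
  let A : Matrix (Fin m) (Fin m) k := .of fun i j => QuadraticMap.polar p (e i) (e j)
  let B : Matrix (Fin m) (Fin m) k := .of fun i j => QuadraticMap.polar p' (e i) (e j)
  let c1 : Matrix (Fin m) Unit k := .of fun i _ => QuadraticMap.polar p' (e i) u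
  let c2 : Matrix Unit (Fin m) k := .of fun _ j => QuadraticMap.polar p' u (e j)
  let d : Matrix Unit Unit k := .of fun _ _ => QuadraticMap.polar p' u u
  have hker : ∀ w ∈ LinearMap.ker (QuadraticMap.polarBilin p), ∀ v,
      QuadraticMap.polar p w v = 0 := by
    intro w hw v
    have := LinearMap.congr_fun (LinearMap.mem_ker.1 hw) v
    simpa using this
  have hA : A.det ≠ 0 := by
    intro h0
    obtain ⟨a, ha, haA⟩ := Matrix.exists_vecMul_eq_zero_iff.2 h0
    apply ha
    apply hind
    rw [LinearMap.mem_ker]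
    have h1 : ∀ j, QuadraticMap.polarBilin p (∑ i, a i • e i) (e j) = 0 := by
      intro j
      have := congrFun haA j
      simpa [Matrix.vecMul, dotProduct, A] using this
    ext v
    have hv : v = (v - ∑ j, x j v • e j) + ∑ j, x j v • e j := by abel
    have h5 : QuadraticMap.polarBilin p (∑ i, a i • e i) (∑ j, x j v • e j) = 0 := by
      rw [map_sum (QuadraticMap.polarBilin p (∑ i, a i • e i))]
      refine Finset.sum_eq_zero fun j _ => ?_
      rw [(QuadraticMap.polarBilin p (∑ i, a i • e i)).map_smul, h1, smul_zero]
    rw [hv, (QuadraticMap.polarBilin p (∑ i, a i • e i)).map_add, h5,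
      QuadraticMap.polarBilin_apply_apply, QuadraticMap.polar_comm, hker _ (hx v)]
    simp
  let N : k → Matrix (Fin m ⊕ Unit) (Fin m ⊕ Unit) k := fun t =>
    Matrix.fromBlocks (A + t • B) (t • c1) c2 d
  let P : Polynomial k := Matrix.det (Matrix.fromBlocks
    (A.map Polynomial.C + (Polynomial.X : Polynomial k) • B.map Polynomial.C)
    ((Polynomial.X : Polynomial k) • c1.map Polynomial.C)
    (c2.map Polynomial.C) (d.map Polynomial.C))
  have hP : ∀ t, P.eval t = (N t).det := by
    intro t
    rw [← Polynomial.coe_evalRingHom, RingHom.map_det]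
    congr 1
    ext i j
    rcases i with i | i <;> rcases j with j | j <;> simp [N] <;> ring
  have hN : ∀ t, t ≠ 0 → (N t).det = 0 := by
    intro t ht
    by_contra hdet
    let w : Fin m ⊕ Unit → V := Sum.elim e (fun _ => u)
    let y : Fin m ⊕ Unit → V := Sum.elim e (fun _ => t⁻¹ • u)
    let L : V →ₗ[k] (V →ₗ[k] k) := QuadraticMap.polarBilin (p + t • p')
    have hNL : ∀ i j, N t i j = L (y i) (w j) := by
      have hu1 := hker u hu
      have hu2 : ∀ v, QuadraticMap.polar p v u = 0 := fun v => by
        rw [QuadraticMap.polar_comm, hu1]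
      intro i j
      rcases i with i | i <;> rcases j with j | j <;>
        simp [N, L, w, y, A, B, c1, c2, d, QuadraticMap.polar_add, QuadraticMap.polar_smul,
          hu1, hu2, ht]
    have h1 := mr_card_le L y w (N t) hNL hdet
    have h3 := hmax t
    rw [mr_quadRank, hmq] at h3
    simp only [Fintype.card_sum, Fintype.card_fin, Fintype.card_unit] at h1
    have : m + 1 ≤ m := h1.trans h3
    omega
  have hP0 : P = 0 := by
    have hX : Polynomial.X * P = 0 := by
      apply Polynomial.funext
      intro t
      by_cases ht : t = 0
      · simp [ht]
      · simp [hP, hN t ht]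
    exact (mul_eq_zero.1 hX).resolve_left Polynomial.X_ne_zero
  have h0 := hP 0
  rw [hP0] at h0
  simp only [N, zero_smul, add_zero, Matrix.det_fromBlocks_zero₁₂, Polynomial.eval_zero] at h0
  have hd : d.det = 0 := (mul_eq_zero.1 h0.symm).resolve_left hA
  have hd2 : QuadraticMap.polar p' u u = 0 := by simpa [d] using hd
  rw [QuadraticMap.polar_self] at hd2
  simpa [h2] using hd2

theorem mr_decomp {k : Type*} [Field k] (h2 : (2 : k) ≠ 0)
    {V : Type*} [AddCommGroup V] [Module k V] {m : ℕ} (W : Submodule k V)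
    (e : Fin m → V) (x : Fin m → (V →ₗ[k] k)) (hx : ∀ v, v - ∑ j, x j v • e j ∈ W)
    (p : QuadraticForm k V) (hp : ∀ u ∈ W, p u = 0) :
    ∃ y : Fin m → (V →ₗ[k] k), ∀ v, p v = ∑ j, x j v * y j v := by
  let c : V →ₗ[k] V := ∑ j, (x j).smulRight (e j)
  have hc : ∀ v, c v = ∑ j, x j v • e j := fun v => by simp [c]
  refine ⟨fun j => (QuadraticMap.polarBilin p (e j)) ∘ₗ
    (LinearMap.id - (2 : k)⁻¹ • c), fun v => ?_⟩
  have h1 : ∑ j, x j v * ((QuadraticMap.polarBilin p (e j)) ∘ₗ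
      (LinearMap.id - (2 : k)⁻¹ • c)) v
      = QuadraticMap.polarBilin p (c v) (v - (2 : k)⁻¹ • c v) := by
    conv_rhs => rw [hc v, map_sum, LinearMap.sum_apply]
    refine Finset.sum_congr rfl fun j _ => ?_
    simp only [map_smul, LinearMap.smul_apply, smul_eq_mul, LinearMap.comp_apply,
      LinearMap.sub_apply, LinearMap.id_apply, hc]
  rw [h1]
  have h3 : p (v - c v) = 0 := hp _ (by rw [hc]; exact hx v)
  have h4 : p v = p (c v) + p (v - c v) + QuadraticMap.polar p (c v) (v - c v) := by
    rw [← QuadraticMap.map_add]; congr 1; abel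
  rw [h4, h3]
  simp only [map_sub, map_smul, QuadraticMap.polarBilin_apply_apply,
    QuadraticMap.polar_sub_right, QuadraticMap.polar_self, smul_eq_mul, nsmul_eq_mul]
  push_cast
  field_simp
  ring

/-- Maxrank inequality: if the cubic form `f = ∑ ℓᵢ qᵢ` has q-rank `r` and `Q` is the span
of the `qᵢ`, then every subspace `Q' ⊆ Q` contains a form `q` with
`dim(Q/Q') + rank(q) ≥ r`. -/
theorem maxrank_inequality {k : Type*} [Field k] [IsAlgClosed k]
    (h2 : (2 : k) ≠ 0) (h3 : (3 : k) ≠ 0)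
    {V : Type*} [AddCommGroup V] [Module k V] [FiniteDimensional k V]
    (f : V → k) {n : ℕ} (ℓ : Fin n → (V →ₗ[k] k)) (q : Fin n → QuadraticForm k V)
    (hexp : ∀ v, f v = ∑ i, ℓ i v * q i v)
    (r : ℕ) (hr : qrank k f = (r : ℕ∞))
    (Q' : Submodule k (QuadraticForm k V))
    (hQ' : Q' ≤ Submodule.span k (Set.range q)) :
    ∃ p ∈ Q',
      r ≤ (Module.finrank k (Submodule.span k (Set.range q)) - Module.finrank k Q')
            + quadRank p := by
  classical
  have : Infinite k := IsAlgClosed.instInfinite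
  -- choose p of maximal rank
  have hbdd : BddAbove (quadRank '' (Q' : Set (QuadraticForm k V))) := by
    refine ⟨Module.finrank k V, ?_⟩
    rintro _ ⟨p, -, rfl⟩
    exact Nat.sub_le _ _
  obtain ⟨p, hpQ, hps⟩ := Nat.sSup_mem
    (⟨_, 0, Q'.zero_mem, rfl⟩ : (quadRank '' (Q' : Set (QuadraticForm k V))).Nonempty) hbdd
  have hpmax : ∀ p' ∈ Q', quadRank p' ≤ quadRank p := fun p' hp' => by
    rw [hps]; exact le_csSup hbdd ⟨p', hp', rfl⟩
  refine ⟨p, hpQ, ?_⟩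
  have hvan : ∀ p' ∈ Q', ∀ u ∈ LinearMap.ker (QuadraticMap.polarBilin p), p' u = 0 :=
    fun p' hp' u hu => mr_vanish h2 p p'
      (fun t => hpmax _ (Q'.add_mem hpQ (Q'.smul_mem t hp'))) u hu
  set Q := Submodule.span k (Set.range q) with hQ
  have : FiniteDimensional k Q := FiniteDimensional.span_of_finite k (Set.finite_range q)
  have hfr : Module.finrank k (Q'.submoduleOf Q) = Module.finrank k Q' :=
    (Submodule.submoduleOfEquivOfLe hQ').finrank_eq
  obtain ⟨g, a, hga, -⟩ := mr_compl (k := k) (V := Q) (Q'.submoduleOf Q)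
  rw [← hfr]
  obtain ⟨e, x, hx, -⟩ := mr_compl (LinearMap.ker (QuadraticMap.polarBilin p))
  let qq : Fin n → Q := fun i => ⟨q i, Submodule.subset_span ⟨i, rfl⟩⟩
  have hq' : ∀ i, q i - ∑ j, a j (qq i) • (g j : QuadraticForm k V) ∈ Q' := by
    intro i
    have := hga (qq i)
    have := Submodule.mem_comap.1 this
    simpa [qq] using this
  choose y hy using fun i => mr_decomp h2 _ e x hx _ (hvan _ (hq' i))
  have key := mr_qrank_le f
    (Sum.elim (fun j => ∑ i, a j (qq i) • ℓ i) x)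
    (Sum.elim (fun j => (g j : QuadraticForm k V))
      (fun j => ∑ i, QuadraticMap.linMulLin (ℓ i) (y i j))) (by
    intro v
    rw [hexp v, Fintype.sum_sum_type]
    simp only [Sum.elim_inl, Sum.elim_inr, LinearMap.sum_apply, _root_.sum_apply,
      LinearMap.smul_apply, QuadraticMap.linMulLin_apply, Finset.sum_mul, Finset.mul_sum,
      smul_eq_mul]
    rw [Finset.sum_comm, Finset.sum_comm (s := Finset.univ (α := Fin (_ - Module.finrank k
      (LinearMap.ker (QuadraticMap.polarBilin p))))), ← Finset.sum_add_distrib]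
    refine Finset.sum_congr rfl fun i _ => ?_
    have h := hy i v
    simp only [_root_.sub_apply, _root_.sum_apply, _root_.smul_apply,
      smul_eq_mul] at h
    rw [sub_eq_iff_eq_add] at h
    rw [h, mul_add, Finset.mul_sum, Finset.mul_sum, add_comm]
    congr 1 <;> exact Finset.sum_congr rfl fun j _ => by ring)
  rw [hr] at key
  simp only [Fintype.card_sum, Fintype.card_fin] at key
  exact_mod_cast key
end

section
/- Intermediate-rank lemma for quadratic forms: let V be a finite-dimensional vector space over a field k of characteristic ≠ 2, let s, t be positive integers, and let q₁,…,q_n be quadratic forms on V each of rank at most s − 1. If some k-linear combination of q₁,…,q_n has rank at least t, then there is a k-linear combination q' of q₁,…,q_n with t ≤ rank(q') ≤ t + s − 2. -/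
open scoped BigOperators

theorem quadRank_eq_aux {k V : Type*} [Field k] [AddCommGroup V] [Module k V]
    [FiniteDimensional k V] (q : QuadraticForm k V) :
    quadRank q = Module.finrank k (LinearMap.range (QuadraticMap.polarBilin q)) := by
  have := LinearMap.finrank_range_add_finrank_ker (QuadraticMap.polarBilin q)
  unfold quadRank
  omega

theorem quadRank_add_aux {k V : Type*} [Field k] [AddCommGroup V] [Module k V]
    [FiniteDimensional k V] (p q : QuadraticForm k V) :
    quadRank (p + q) ≤ quadRank p + quadRank q := by
  rw [quadRank_eq_aux, quadRank_eq_aux, quadRank_eq_aux]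
  have h : QuadraticMap.polarBilin (p + q) =
      QuadraticMap.polarBilin p + QuadraticMap.polarBilin q := by
    ext x y
    simp [QuadraticMap.polar_add]
  rw [h]
  exact (Submodule.finrank_mono (LinearMap.range_add_le _ _)).trans
    (Submodule.finrank_add_le_finrank_add_finrank _ _)

theorem quadRank_smul_aux {k V : Type*} [Field k] [AddCommGroup V] [Module k V]
    [FiniteDimensional k V] (a : k) (q : QuadraticForm k V) :
    quadRank (a • q) ≤ quadRank q := by
  rw [quadRank_eq_aux, quadRank_eq_aux]
  apply Submodule.finrank_mono
  rintro _ ⟨x, rfl⟩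
  refine ⟨a • x, ?_⟩
  ext y
  simp [QuadraticMap.polar_smul]

theorem quadRank_zero_aux {k V : Type*} [Field k] [AddCommGroup V] [Module k V]
    [FiniteDimensional k V] : quadRank (0 : QuadraticForm k V) = 0 := by
  have := quadRank_smul_aux (0 : k) (0 : QuadraticForm k V)
  have h : QuadraticMap.polarBilin (0 : QuadraticForm k V) = 0 := by
    ext x y
    simp [QuadraticMap.polar]
  rw [quadRank_eq_aux, h]
  simp

/-- Intermediate-rank lemma: if each `qᵢ` has rank at most `s - 1` and some linear
combination has rank at least `t`, then some linear combination `q'` satisfies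
`t ≤ rank q' ≤ t + s - 2`. -/
theorem intermediate_rank {k : Type*} [Field k]
    (h2 : (2 : k) ≠ 0)
    {V : Type*} [AddCommGroup V] [Module k V] [FiniteDimensional k V]
    (s t : ℕ) (hs : 0 < s) (ht : 0 < t)
    {n : ℕ} (q : Fin n → QuadraticForm k V)
    (hq : ∀ i, quadRank (q i) ≤ s - 1)
    (c : Fin n → k) (hc : t ≤ quadRank (∑ i, c i • q i)) :
    ∃ c' : Fin n → k,
      t ≤ quadRank (∑ i, c' i • q i) ∧ quadRank (∑ i, c' i • q i) ≤ t + s - 2 := by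
  classical
  suffices H : ∀ S : Finset (Fin n), t ≤ quadRank (∑ i ∈ S, c i • q i) →
      ∃ S : Finset (Fin n), t ≤ quadRank (∑ i ∈ S, c i • q i) ∧
        quadRank (∑ i ∈ S, c i • q i) ≤ t + s - 2 by
    obtain ⟨S, h⟩ := H Finset.univ hc
    refine ⟨fun i => if i ∈ S then c i else 0, ?_⟩
    have e : ∑ i, (if i ∈ S then c i else 0) • q i = ∑ i ∈ S, c i • q i := by
      simp [ite_smul, Finset.sum_ite_mem]
    rw [e]
    exact h
  intro S
  induction S using Finset.induction_on with
  | empty =>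
    intro h
    rw [Finset.sum_empty, quadRank_zero_aux] at h
    omega
  | insert a S ha ih =>
    intro h
    by_cases h' : t ≤ quadRank (∑ i ∈ S, c i • q i)
    · exact ih h'
    · refine ⟨insert a S, h, ?_⟩
      rw [Finset.sum_insert ha]
      have h1 := quadRank_add_aux (c a • q a) (∑ i ∈ S, c i • q i)
      have h3 := quadRank_smul_aux (c a) (q a)
      have h4 := hq a
      omega
end

section
/- High-minrank subspace of quadrics in a high q-rank cubic: let V be a finite-dimensional k-vector space and suppose the cubic form f on V has q-rank r and admits an expression f(v) = Σ_{i=1}^n ℓᵢ(v)·qᵢ(v) with ℓᵢ linear functionals and qᵢ quadratic forms on V; let Q be the linear span of q₁,…,q_n. Let a and s be positive integers satisfying (2^a − 1)(s − 1) + a ≤ r. Then there exists an a-dimensional linear subspace Q' ⊆ Q such that every nonzero element of Q' has rank at least s. -/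
open scoped BigOperators

section MinrankHelpers

variable {k : Type*} [Field k] {V : Type*} [AddCommGroup V] [Module k V]

lemma pb_add (p q : QuadraticForm k V) :
    QuadraticMap.polarBilin (p + q) = QuadraticMap.polarBilin p + QuadraticMap.polarBilin q :=
  LinearMap.ext₂ fun _ _ => by simp [QuadraticMap.polar_add]

lemma pb_smul (c : k) (p : QuadraticForm k V) :
    QuadraticMap.polarBilin (c • p) = c • QuadraticMap.polarBilin p :=
  LinearMap.ext₂ fun _ _ => by simp [QuadraticMap.polar_smul]

lemma quadRank_eq [FiniteDimensional k V] (p : QuadraticForm k V) :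
    quadRank p = Module.finrank k (LinearMap.range (QuadraticMap.polarBilin p)) := by
  have := LinearMap.finrank_range_add_finrank_ker (QuadraticMap.polarBilin p)
  unfold quadRank
  omega

lemma quadRank_zero' [FiniteDimensional k V] : quadRank (0 : QuadraticForm k V) = 0 := by
  have : QuadraticMap.polarBilin (0 : QuadraticForm k V) = 0 :=
    LinearMap.ext₂ fun _ _ => by simp [QuadraticMap.polar]
  rw [quadRank_eq, this]
  simp

lemma quadRank_smul_le [FiniteDimensional k V] (c : k) (p : QuadraticForm k V) :
    quadRank (c • p) ≤ quadRank p := by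
  rw [quadRank_eq, quadRank_eq, pb_smul]
  exact Submodule.finrank_mono (LinearMap.range_smul_le_range _ _)

lemma quadRank_smul_eq [FiniteDimensional k V] {c : k} (hc : c ≠ 0) (p : QuadraticForm k V) :
    quadRank (c • p) = quadRank p := by
  rw [quadRank_eq, quadRank_eq, pb_smul, LinearMap.range_smul _ _ hc]

lemma quadRank_add_le [FiniteDimensional k V] (p q : QuadraticForm k V) :
    quadRank (p + q) ≤ quadRank p + quadRank q := by
  rw [quadRank_eq, quadRank_eq, quadRank_eq, pb_add]
  exact (Submodule.finrank_mono (LinearMap.range_add_le _ _)).trans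
    (Submodule.finrank_add_le_finrank_add_finrank _ _)

lemma exists_inj_perturb [Infinite k] {E F : Type*} [AddCommGroup E] [Module k E]
    [FiniteDimensional k E] [AddCommGroup F] [Module k F] (F0 F1 : E →ₗ[k] F)
    (h : Function.Injective F0) : ∃ c : k, c ≠ 0 ∧ Function.Injective (F0 + c • F1) := by
  obtain ⟨G, hG⟩ := F0.exists_leftInverse_of_injective (LinearMap.ker_eq_bot.2 h)
  have hfin : (({μ | Module.End.HasEigenvalue (G ∘ₗ F1) μ} : Set k) ∪ {0}).Finite :=
    (Module.End.finite_hasEigenvalue (G ∘ₗ F1)).union (Set.finite_singleton _)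
  obtain ⟨μ, hμ⟩ := hfin.exists_notMem
  simp only [Set.mem_union, Set.mem_ofPred_eq, Set.mem_singleton_iff, not_or] at hμ
  refine ⟨-μ⁻¹, by simpa using hμ.2, ?_⟩
  rw [← LinearMap.ker_eq_bot, LinearMap.ker_eq_bot']
  intro x hx
  by_contra hx0
  apply hμ.1
  refine Module.End.hasEigenvalue_of_hasEigenvector (x := x) ⟨?_, hx0⟩
  rw [Module.End.mem_eigenspace_iff]
  have h1 : G ((F0 + (-μ⁻¹) • F1) x) = 0 := by rw [hx, map_zero]
  have h2 : G (F0 x) = x := LinearMap.congr_fun hG x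
  simp only [LinearMap.add_apply, LinearMap.smul_apply, map_add, map_smul, h2] at h1
  have h3 : x = μ⁻¹ • G (F1 x) := by
    rw [neg_smul, ← sub_eq_add_neg] at h1
    exact sub_eq_zero.1 h1
  rw [LinearMap.comp_apply]
  conv_rhs => rw [h3]
  rw [smul_smul, mul_inv_cancel₀ hμ.2, one_smul]

/-- If `p0` has maximal rank in the pencil, `p` vanishes on the radical of `p0`. -/
lemma vanish_on_radical [Infinite k] [FiniteDimensional k V] (h2 : (2 : k) ≠ 0)
    (p0 p : QuadraticForm k V) (hmax : ∀ c : k, quadRank (p0 + c • p) ≤ quadRank p0)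
    (w : V) (hw : w ∈ LinearMap.ker (QuadraticMap.polarBilin p0)) : p w = 0 := by
  by_contra hpw
  set B0 := QuadraticMap.polarBilin p0 with hB0
  set B := QuadraticMap.polarBilin p with hB
  have hBw : B w w ≠ 0 := by
    rw [hB, QuadraticMap.polarBilin_apply_apply, QuadraticMap.polar_self, nsmul_eq_mul]
    exact mul_ne_zero (by exact_mod_cast h2) hpw
  obtain ⟨U, hU⟩ := Submodule.exists_isCompl (LinearMap.ker B0)
  have hw0 : B0 w = 0 := hw
  let F0 : (U × k) →ₗ[k] (V →ₗ[k] k) :=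
    LinearMap.coprod (B0 ∘ₗ U.subtype) (LinearMap.toSpanSingleton k _ (B w))
  let F1 : (U × k) →ₗ[k] (V →ₗ[k] k) := (B ∘ₗ U.subtype) ∘ₗ LinearMap.fst k U k
  have hinj : Function.Injective F0 := by
    rw [← LinearMap.ker_eq_bot, LinearMap.ker_eq_bot']
    rintro ⟨u, t⟩ hx
    have hx' : B0 u + t • B w = 0 := by simpa [F0] using hx
    have h1 : B0 u w = 0 := by
      have : B0 u w = B0 w u := QuadraticMap.polar_comm _ _ _
      rw [this, hw0]; rfl
    have ht : t = 0 := by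
      have := LinearMap.congr_fun hx' w
      simpa [h1, hBw] using this
    subst ht
    have hu : (u : V) ∈ LinearMap.ker B0 := by simpa using hx'
    have : (u : V) = 0 := by
      have := hU.disjoint.le_bot ⟨hu, u.2⟩
      simpa using this
    ext <;> simp [this]
  obtain ⟨c, hc, hci⟩ := exists_inj_perturb F0 F1 hinj
  have hle : LinearMap.range (F0 + c • F1) ≤
      LinearMap.range (QuadraticMap.polarBilin (p0 + c • p)) := by
    rintro _ ⟨⟨u, t⟩, rfl⟩
    refine ⟨u + (t * c⁻¹) • w, ?_⟩
    rw [pb_add, pb_smul, ← hB0, ← hB]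
    simp only [F0, F1, LinearMap.add_apply, LinearMap.smul_apply, map_add, map_smul, hw0,
      LinearMap.coprod_apply, LinearMap.comp_apply, Submodule.subtype_apply,
      LinearMap.toSpanSingleton_apply, LinearMap.fst_apply, smul_zero, smul_add,
      smul_smul]
    rw [show t * c⁻¹ * c = t by field_simp]
    abel
  have h1 := Submodule.finrank_mono hle
  rw [LinearMap.finrank_range_of_inj hci, ← quadRank_eq, Module.finrank_prod,
    Module.finrank_self] at h1
  have h3 := hmax c
  have h4 := Submodule.finrank_add_eq_of_isCompl hU
  have h5 : quadRank p0 = Module.finrank k V - Module.finrank k (LinearMap.ker B0) := rfl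
  omega

/-- A linear space of quadrics of rank at most `t` lies in an ideal generated by at most `t`
linear forms. -/
lemma bounded_rank [Infinite k] [FiniteDimensional k V] (h2 : (2 : k) ≠ 0)
    (L : Submodule k (QuadraticForm k V)) (t : ℕ) (ht : ∀ p ∈ L, quadRank p ≤ t) :
    ∃ m ≤ t, ∃ lam : Fin m → (V →ₗ[k] k), ∀ p ∈ L, ∃ mu : Fin m → (V →ₗ[k] k),
      ∀ v, p v = ∑ j, lam j v * mu j v := by
  obtain ⟨p0, hp0, hmax⟩ : ∃ p0 ∈ L, ∀ p ∈ L, quadRank p ≤ quadRank p0 := by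
    have hfin : (quadRank '' (L : Set (QuadraticForm k V))).Finite :=
      (Set.finite_Iic t).subset (by rintro _ ⟨p, hp, rfl⟩; exact ht p hp)
    obtain ⟨_, ⟨p0, hp0, rfl⟩, h⟩ := hfin.exists_maximal ⟨_, 0, L.zero_mem, rfl⟩
    refine ⟨p0, hp0, fun p hp => ?_⟩
    by_contra hlt
    exact hlt (h ⟨p, hp, rfl⟩ (by omega))
  have hvan : ∀ p ∈ L, ∀ w ∈ LinearMap.ker (QuadraticMap.polarBilin p0), p w = 0 :=
    fun p hp w hw => vanish_on_radical h2 p0 p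
      (fun c => hmax _ (L.add_mem hp0 (L.smul_mem c hp))) w hw
  obtain ⟨U, hU⟩ := Submodule.exists_isCompl (LinearMap.ker (QuadraticMap.polarBilin p0))
  set W := LinearMap.ker (QuadraticMap.polarBilin p0) with hW
  have hdim := Submodule.finrank_add_eq_of_isCompl hU
  have hr : quadRank p0 = Module.finrank k V - Module.finrank k W := rfl
  refine ⟨Module.finrank k U, by have := ht p0 hp0; omega, ?_⟩
  let b := Module.finBasis k U
  let π := U.projectionOnto W hU.symm
  refine ⟨fun j => b.coord j ∘ₗ π, fun p hp => ?_⟩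
  let B := QuadraticMap.polarBilin p
  let D : V →ₗ[k] V := LinearMap.id + (LinearMap.id - U.subtype ∘ₗ π)
  refine ⟨fun j => (2 : k)⁻¹ • (B (b j) ∘ₗ D), fun v => ?_⟩
  have hmemW : v - (π v : V) ∈ W := by
    have : π (v - (π v : V)) = 0 := by
      rw [map_sub, sub_eq_zero]
      exact (Submodule.projectionOnto_apply_left hU.symm (π v)).symm
    exact (Submodule.projectionOnto_apply_eq_zero_iff hU.symm).1 this
  have hs : ∑ j, (b.coord j (π v)) • B (b j) = B (π v) := by
    have h := congrArg (fun u : U => B (u : V)) (b.sum_repr (π v))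
    simp only [Submodule.coe_sum, Submodule.coe_smul, map_sum, map_smul] at h
    exact h
  have hD : D v = v + (v - (π v : V)) := by simp [D]
  have e1 : ∑ j, (b.coord j ∘ₗ π) v * ((2 : k)⁻¹ • (B (b j) ∘ₗ D)) v
      = (2 : k)⁻¹ * B (π v) (D v) := by
    rw [← hs, LinearMap.sum_apply, Finset.mul_sum]
    refine Finset.sum_congr rfl fun j _ => ?_
    simp only [LinearMap.comp_apply, LinearMap.smul_apply, smul_eq_mul]
    ring
  rw [e1]
  have hself : ∀ x, B x x = 2 * p x := fun x => by
    simp only [B, QuadraticMap.polarBilin_apply_apply, QuadraticMap.polar_self, nsmul_eq_mul]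
    norm_num
  have hsym : ∀ x y, B x y = B y x := fun x y => QuadraticMap.polar_comm _ _ _
  have h0 : B (v - (π v : V)) (v - (π v : V)) = 0 := by rw [hself, hvan p hp _ hmemW, mul_zero]
  have h1 : 2 * p v = B (π v) (D v) := by
    rw [← hself, hD]
    simp only [map_sub, map_add, LinearMap.sub_apply] at h0 ⊢
    rw [hsym v (π v)] at h0
    linear_combination h0
  rw [← h1, inv_mul_cancel_left₀ h2]

lemma qrank_le_of_expr {f : V → k} {ι : Type*} [Fintype ι] (l : ι → (V →ₗ[k] k))
    (q : ι → QuadraticForm k V) (h : ∀ v, f v = ∑ i, l i v * q i v) :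
    qrank k f ≤ (Fintype.card ι : ℕ∞) := by
  apply sInf_le
  refine ⟨Fintype.card ι, rfl, fun i => l ((Fintype.equivFin ι).symm i),
    fun i => q ((Fintype.equivFin ι).symm i), fun v => ?_⟩
  rw [h v]
  exact ((Fintype.equivFin ι).symm.sum_comp (fun i => l i v * q i v)).symm

lemma span_window [FiniteDimensional k V] (Q : Submodule k (QuadraticForm k V)) (s : ℕ)
    (hs : 0 < s)
    (z : QuadraticForm k V) (hz : z ∈ Submodule.span k {p | p ∈ Q ∧ quadRank p < s}) :
    ∀ T, T < quadRank z → ∃ x ∈ Q, T < quadRank x ∧ quadRank x ≤ T + (s - 1) := by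
  have hLQ : Submodule.span k {p | p ∈ Q ∧ quadRank p < s} ≤ Q :=
    Submodule.span_le.2 fun p hp => hp.1
  have hz' : z ∈ AddSubmonoid.closure {p | p ∈ Q ∧ quadRank p < s} := by
    have h := hz
    induction h using Submodule.span_induction with
    | mem x hx => exact AddSubmonoid.subset_closure hx
    | zero => exact zero_mem _
    | add x y hx hy h1 h2 => exact add_mem (h1 hx) (h2 hy)
    | smul c x hx h1 =>
      have h := h1 hx
      clear h1 hx hz
      induction h using AddSubmonoid.closure_induction with
      | mem x hx => 
        exact AddSubmonoid.subset_closure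
          ⟨Q.smul_mem c hx.1, (quadRank_smul_le c x).trans_lt hx.2⟩
      | zero => rw [smul_zero]; exact zero_mem _
      | add x y hx hy h1 h2 => rw [smul_add]; exact add_mem h1 h2
  clear hz
  have : z ∈ Q ∧ ∀ T, T < quadRank z → ∃ x ∈ Q, T < quadRank x ∧ quadRank x ≤ T + (s - 1) := by
    induction hz' using AddSubmonoid.closure_induction_right with
    | zero => exact ⟨zero_mem _, fun T hT => by simp [quadRank_zero'] at hT⟩
    | add_right x hx y hy ih =>
      refine ⟨Q.add_mem ih.1 hy.1, fun T hT => ?_⟩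
      by_cases h : T < quadRank x
      · exact ih.2 T h
      · refine ⟨x + y, Q.add_mem ih.1 hy.1, hT, ?_⟩
        have := quadRank_add_le x y
        have := hy.2
        omega
  exact this.2

lemma exists_sub_finrank (D : Submodule k V) (a : ℕ) (h : a ≤ Module.finrank k D)
    [FiniteDimensional k D] : ∃ D' ≤ D, Module.finrank k D' = a := by
  let b := Module.finBasis k D
  let e : Fin a → V := fun i => (b (Fin.castLE h i) : V)
  have he : LinearIndependent k e :=
    (b.linearIndependent.map' _ (Submodule.ker_subtype _)).comp _ (Fin.castLE_injective h)
  refine ⟨Submodule.span k (Set.range e), ?_, ?_⟩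
  · rw [Submodule.span_le]
    rintro _ ⟨i, rfl⟩
    exact (b (Fin.castLE h i)).2
  · rw [finrank_span_eq_card he, Fintype.card_fin]

lemma exists_coords (D : Submodule k V) [FiniteDimensional k D] :
    ∃ e : Fin (Module.finrank k D) → V, ∀ x ∈ D, ∃ c : Fin (Module.finrank k D) → k,
      x = ∑ j, c j • e j := by
  let b := Module.finBasis k D
  refine ⟨fun j => b j, fun x hx => ⟨fun j => b.repr ⟨x, hx⟩ j, ?_⟩⟩
  have h := congrArg (fun u : D => (u : V)) (b.sum_repr ⟨x, hx⟩)
  simp only [Submodule.coe_sum, Submodule.coe_smul] at h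
  exact h.symm

lemma build_subspace [FiniteDimensional k V] (Q : Submodule k (QuadraticForm k V))
    (s M : ℕ) (hs : 0 < s)
    (hwin : ∀ T ≤ M, ∃ x ∈ Q, T < quadRank x ∧ quadRank x ≤ T + (s - 1)) :
    ∀ i : ℕ, (2 ^ i - 1) * (s - 1) ≤ M → ∃ Q' ≤ Q, FiniteDimensional k Q' ∧
      Module.finrank k Q' = i ∧ (∀ p ∈ Q', p ≠ 0 → s ≤ quadRank p) ∧
      ∀ p ∈ Q', quadRank p ≤ (2 ^ (i + 1) - 2) * (s - 1) := by
  intro i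
  induction i with
  | zero =>
    intro _
    refine ⟨⊥, bot_le, inferInstance, by simp, ?_, ?_⟩
    · intro p hp h; exact absurd (by simpa using hp) h
    · intro p hp
      have : p = 0 := by simpa using hp
      simp [this, quadRank_zero']
  | succ i ih =>
    intro hM
    obtain ⟨Q', hQ, hfd, hdim, hlow, hup⟩ := ih (le_trans (Nat.mul_le_mul_right _
      (Nat.sub_le_sub_right (Nat.pow_le_pow_right (by norm_num) (Nat.le_succ i)) 1)) hM)
    obtain ⟨x, hxQ, hx1, hx2⟩ := hwin _ hM
    obtain ⟨N, hN⟩ : ∃ N, 2 ^ i = N + 1 := ⟨2 ^ i - 1, by have := Nat.two_pow_pos i; omega⟩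
    have e1 : 2 ^ (i + 1) - 1 = 2 * N + 1 := by rw [pow_succ]; omega
    have e2 : 2 ^ (i + 1) - 2 = 2 * N := by rw [pow_succ]; omega
    have e3 : 2 ^ (i + 1 + 1) - 2 = 4 * N + 2 := by rw [pow_succ, pow_succ]; omega
    obtain ⟨S, rfl⟩ : ∃ S, s = S + 1 := ⟨s - 1, by omega⟩
    rw [e1, Nat.add_sub_cancel] at hx1 hx2
    rw [e2, Nat.add_sub_cancel] at hup
    rw [e3, Nat.add_sub_cancel]
    have key : ∀ p ∈ Q', ∀ c : k, c ≠ 0 → S + 1 ≤ quadRank (p + c • x) := by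
      intro p hp c hc
      have h1 := quadRank_add_le (p + c • x) ((-1 : k) • p)
      rw [show p + c • x + (-1 : k) • p = c • x by module,
        quadRank_smul_eq hc] at h1
      have h2 := quadRank_smul_le (-1 : k) p
      have h3 := hup p hp
      nlinarith
    have hxn : x ∉ Q' := by
      intro hx
      have := hup x hx
      nlinarith
    have hx0 : x ≠ 0 := fun h => hxn (h ▸ zero_mem _)
    refine ⟨Q' ⊔ Submodule.span k {x}, ?_, inferInstance, ?_, ?_, ?_⟩
    · exact sup_le hQ (by simpa using hxQ)
    · have h1 := Submodule.finrank_sup_add_finrank_inf_eq Q' (Submodule.span k {x})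
      have h2 : Q' ⊓ Submodule.span k {x} = ⊥ := by
        rw [← disjoint_iff, Submodule.disjoint_span_singleton' hx0]
        exact hxn
      rw [h2, finrank_bot, finrank_span_singleton hx0, hdim] at h1
      simpa using h1
    · intro p hp hp0
      obtain ⟨y, hy, z, hz, rfl⟩ := Submodule.mem_sup.1 hp
      obtain ⟨c, rfl⟩ := Submodule.mem_span_singleton.1 hz
      by_cases hc : c = 0
      · subst hc
        rw [zero_smul, add_zero] at hp0 ⊢
        exact hlow y hy hp0
      · exact key y hy c hc
    · intro p hp
      obtain ⟨y, hy, z, hz, rfl⟩ := Submodule.mem_sup.1 hp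
      obtain ⟨c, rfl⟩ := Submodule.mem_span_singleton.1 hz
      have h1 := quadRank_add_le y (c • x)
      have h2 := quadRank_smul_le c x
      have h3 := hup y hy
      nlinarith

end MinrankHelpers

/-- High-minrank subspace of quadrics in a high q-rank cubic: if the cubic form
`f = ∑ ℓᵢ qᵢ` has q-rank `r` and `(2^a - 1)(s - 1) + a ≤ r`, then the span of the `qᵢ`
contains an `a`-dimensional subspace all of whose nonzero elements have rank at least `s`. -/
theorem minrank_subspace_of_qrank {k : Type*} [Field k] [IsAlgClosed k]
    (h2 : (2 : k) ≠ 0) (h3 : (3 : k) ≠ 0)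
    {V : Type*} [AddCommGroup V] [Module k V] [FiniteDimensional k V]
    (f : V → k) {n : ℕ} (ℓ : Fin n → (V →ₗ[k] k)) (q : Fin n → QuadraticForm k V)
    (hexp : ∀ v, f v = ∑ i, ℓ i v * q i v)
    (r : ℕ) (hr : qrank k f = (r : ℕ∞))
    (a s : ℕ) (ha : 0 < a) (hs : 0 < s)
    (hineq : (2 ^ a - 1) * (s - 1) + a ≤ r) :
    ∃ Q' ≤ Submodule.span k (Set.range q), Module.finrank k Q' = a ∧
      ∀ p ∈ Q', p ≠ 0 → s ≤ quadRank p := by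
  classical
  have : Infinite k := IsAlgClosed.instInfinite
  set Q := Submodule.span k (Set.range q) with hQ
  have hQfd : FiniteDimensional k Q := FiniteDimensional.span_of_finite k (Set.finite_range q)
  set L := Submodule.span k {p | p ∈ Q ∧ quadRank p < s} with hL
  have hLQ : L ≤ Q := Submodule.span_le.2 fun p hp => hp.1
  obtain ⟨C, hC⟩ := Submodule.exists_isCompl L
  obtain ⟨D, hD⟩ : ∃ D : Submodule k (QuadraticForm k V), D = Q ⊓ C := ⟨_, rfl⟩
  have hDQ : D ≤ Q := hD ▸ inf_le_left
  have hDC : D ≤ C := hD ▸ inf_le_right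
  have hCfd : FiniteDimensional k D :=
    Submodule.finiteDimensional_of_le hDQ
  by_cases hcase : a ≤ Module.finrank k D
  · obtain ⟨Q', hle, hfr⟩ := exists_sub_finrank D a hcase
    refine ⟨Q', hle.trans hDQ, hfr, ?_⟩
    · intro p hp hp0
      by_contra hlt
      have hpC := hDC (hle hp)
      have hpL : p ∈ L := Submodule.subset_span ⟨hDQ (hle hp), not_le.1 hlt⟩
      exact hp0 (by simpa using hC.disjoint.le_bot ⟨hpL, hpC⟩)
  · have hbig : ∃ z ∈ L, (2 ^ a - 1) * (s - 1) < quadRank z := by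
      by_contra hno
      push Not at hno
      obtain ⟨m, hm, lam, hlam⟩ := bounded_rank h2 L _ hno
      obtain ⟨e, he⟩ := exists_coords D
      have hdec : ∀ i, ∃ p ∈ L, ∃ y ∈ D,
          q i = p + y := by
        intro i
        have hi : q i ∈ Q := Submodule.subset_span ⟨i, rfl⟩
        have ht : q i ∈ L ⊔ C := by rw [hC.sup_eq_top]; trivial
        obtain ⟨p, hp, y, hy, hpy⟩ := Submodule.mem_sup.1 ht
        refine ⟨p, hp, y, hD ▸ ⟨?_, hy⟩, hpy.symm⟩
        have : y = q i - p := by rw [← hpy]; abel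
        rw [this]
        exact Q.sub_mem hi (hLQ hp)
      choose p hp y hyD hy using hdec
      choose c hc using fun i => he (y i) (hyD i)
      choose mu hmu using fun i => hlam (p i) (hp i)
      have hle := qrank_le_of_expr (f := f)
        (ι := Fin (Module.finrank k D) ⊕ Fin m)
        (Sum.elim (fun j => ∑ i, c i j • ℓ i) lam)
        (Sum.elim (fun j => e j)
          (fun j => ∑ i, QuadraticMap.linMulLin (ℓ i) (mu i j))) (by
          intro v
          rw [hexp v, Fintype.sum_sum_type]
          simp only [Sum.elim_inl, Sum.elim_inr, LinearMap.sum_apply, LinearMap.smul_apply,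
            QuadraticMap.sum_apply, QuadraticMap.linMulLin_apply, Finset.sum_mul,
            Finset.mul_sum, smul_eq_mul]
          rw [Finset.sum_comm, Finset.sum_comm (s := (Finset.univ : Finset (Fin m))),
            ← Finset.sum_add_distrib]
          refine Finset.sum_congr rfl fun i _ => ?_
          have hyv : y i v
              = ∑ j, c i j * e j v := by
            rw [hc i]
            simp [QuadraticMap.sum_apply]
          rw [hy i, QuadraticMap.add_apply, hmu i v, hyv, mul_add, Finset.mul_sum,
            Finset.mul_sum, add_comm]
          congr 1
          · exact Finset.sum_congr rfl fun j _ => by ring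
          · exact Finset.sum_congr rfl fun j _ => by ring)
      rw [hr, Fintype.card_sum, Fintype.card_fin, Fintype.card_fin] at hle
      have hle2 : r ≤ Module.finrank k D + m := by exact_mod_cast hle
      omega
    obtain ⟨z, hzL, hz⟩ := hbig
    obtain ⟨Q', h1, -, h3, h4, -⟩ := build_subspace Q s ((2 ^ a - 1) * (s - 1)) hs
      (fun T hT => span_window Q s hs z hzL T (lt_of_le_of_lt hT hz)) a le_rfl
    exact ⟨Q', h1, h3, h4⟩
end

section
/- Quantitative surjectivity of orbit closures: let f ∈ P₃(kⁿ) have q-rank r, and let d ≤ n be a natural number satisfying 2·((2^d − 1)(d²·2^d + 2(d+1)d − 1) + d) ≤ ξ(r). Then the Zariski closure of the GLₙ(k)-orbit of f surjects onto P₃(k^d): for every homogeneous degree-3 polynomial h in the first d variables there exists g in the Zariski closure of the GLₙ(k)-orbit of f with π_d(g) = h. -/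
open scoped BigOperators

/-- The q-rank of a multivariate polynomial `f`: the least `m` such that
`f = ∑ ℓᵢ · qᵢ` with each `ℓᵢ` homogeneous of degree 1 and each `qᵢ` homogeneous
of degree 2, as an element of `ℕ∞`. -/
noncomputable def polyQRank {k : Type*} [Field k] {n : ℕ}
    (f : MvPolynomial (Fin n) k) : ℕ∞ :=
  sInf {r : ℕ∞ | ∃ m : ℕ, r = m ∧
    ∃ ℓ q : Fin m → MvPolynomial (Fin n) k,
      (∀ i, (ℓ i).IsHomogeneous 1) ∧ (∀ i, (q i).IsHomogeneous 2) ∧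
        f = ∑ i, ℓ i * q i}

/-- The action of `GLₙ(k)` on `MvPolynomial (Fin n) k` by invertible linear
substitution of the variables. -/
noncomputable def glAct {k : Type*} [Field k] {n : ℕ} (g : GL (Fin n) k)
    (f : MvPolynomial (Fin n) k) : MvPolynomial (Fin n) k :=
  MvPolynomial.aeval
    (fun j => ∑ i, MvPolynomial.C ((g : Matrix (Fin n) (Fin n) k) i j) *
      MvPolynomial.X i) f

/-- The `GLₙ(k)`-orbit of a polynomial. -/
def glOrbit {k : Type*} [Field k] {n : ℕ} (f : MvPolynomial (Fin n) k) :
    Set (MvPolynomial (Fin n) k) :=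
  {h | ∃ g : GL (Fin n) k, h = glAct g f}

/-- `g` lies in the Zariski closure of `S ⊆ MvPolynomial (Fin n) k`: every polynomial
in the coefficients (coordinates w.r.t. the monomial basis) vanishing on `S`
vanishes at `g`. -/
def InZariskiClosure {k : Type*} [Field k] {n : ℕ}
    (S : Set (MvPolynomial (Fin n) k)) (g : MvPolynomial (Fin n) k) : Prop :=
  ∀ P : MvPolynomial (Fin n →₀ ℕ) k,
    (∀ f ∈ S, MvPolynomial.eval (fun m => MvPolynomial.coeff m f) P = 0) →
    MvPolynomial.eval (fun m => MvPolynomial.coeff m g) P = 0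

/-- `ξ(d) = ⌊(√(8d+17) − 3)/2⌋`. -/
noncomputable def xi (d : ℕ) : ℕ := ⌊(Real.sqrt (8 * d + 17) - 3) / 2⌋₊

/-- The restriction map `π_d : P₃(kⁿ) → P₃(k^d)`: substitute `0` for all variables
of index `≥ d`. -/
noncomputable def restrictVars {k : Type*} [Field k] {n : ℕ} (d : ℕ)
    (f : MvPolynomial (Fin n) k) : MvPolynomial (Fin d) k :=
  MvPolynomial.aeval
    (fun i : Fin n => if h : (i : ℕ) < d then MvPolynomial.X ⟨i, h⟩ else 0) f

section Iso
open Module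
variable {k V : Type*} [Field k] [AddCommGroup V] [Module k V] [FiniteDimensional k V]

lemma hyper_fr (W : Submodule k V) (φ : V →ₗ[k] k) :
    finrank k W ≤ finrank k (W ⊓ LinearMap.ker φ : Submodule k V) + 1 := by
  have h1 := Submodule.finrank_sup_add_finrank_inf_eq W (LinearMap.ker φ)
  have h2 := LinearMap.finrank_range_add_finrank_ker φ
  have h3 : finrank k (LinearMap.range φ) ≤ 1 := by
    simpa using Submodule.finrank_le (LinearMap.range φ)
  have h4 := Submodule.finrank_le (W ⊔ LinearMap.ker φ)
  omega

lemma exists_fun_ne {v : V} (hv : v ≠ 0) : ∃ φ : V →ₗ[k] k, φ v ≠ 0 := by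
  obtain ⟨φ, h, -⟩ := Submodule.exists_le_ker_of_notMem (p := (⊥ : Submodule k V)) (v := v)
    (by simpa using hv)
  exact ⟨φ, h⟩

lemma exists_nz (W : Submodule k V) (h : 1 ≤ finrank k W) : ∃ v ∈ W, v ≠ 0 := by
  apply Submodule.exists_mem_ne_zero_of_ne_bot
  rintro rfl
  simp at h

lemma two_vec (W : Submodule k V) (h : 2 ≤ finrank k W) :
    ∃ x ∈ W, ∃ y ∈ W, y ≠ 0 ∧ ∀ t : k, x + t • y ≠ 0 := by
  obtain ⟨x, hx, hx0⟩ := exists_nz W (by omega)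
  obtain ⟨φ, hφ⟩ := exists_fun_ne (k := k) hx0
  obtain ⟨y, hy, hy0⟩ := exists_nz (W ⊓ LinearMap.ker φ) (by have := hyper_fr W φ; omega)
  refine ⟨x, hx, y, hy.1, hy0, fun t ht => hφ ?_⟩
  have h2 : φ y = 0 := hy.2
  have := congrArg φ ht
  simpa [h2] using this

lemma sup_fr (U : Submodule k V) (v : V) (hv : v ∉ U) :
    finrank k (U ⊔ Submodule.span k {v} : Submodule k V) = finrank k U + 1 := by
  have h1 := Submodule.finrank_sup_add_finrank_inf_eq U (Submodule.span k {v})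
  have hv0 : v ≠ 0 := by rintro rfl; exact hv U.zero_mem
  rw [finrank_span_singleton hv0] at h1
  have : U ⊓ Submodule.span k {v} = ⊥ := by
    rw [← disjoint_iff]
    exact Submodule.disjoint_span_singleton_of_notMem hv
  rw [this] at h1
  simpa using h1

variable [IsAlgClosed k]

lemma iso_quad (B : V →ₗ[k] V →ₗ[k] k) (hB : ∀ x y, B x y = B y x) (m : ℕ) :
    ∀ W : Submodule k V, 2 * m ≤ finrank k W →
    ∃ U ≤ W, finrank k U = m ∧ ∀ u ∈ U, B u u = 0 := by
  induction m with
  | zero => 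
    intro W _
    exact ⟨⊥, bot_le, by simp, by simp⟩
  | succ m ih =>
    intro W hW
    have : ∃ v ∈ W, v ≠ 0 ∧ B v v = 0 := by
      obtain ⟨x, hx, y, hy, hy0, hxy⟩ := two_vec W (by omega)
      by_cases hyy : B y y = 0
      · exact ⟨y, hy, hy0, hyy⟩
      · obtain ⟨t, ht⟩ := IsAlgClosed.exists_root
          (Polynomial.C (B y y) * Polynomial.X ^ 2 + Polynomial.C (2 * B x y) * Polynomial.X
            + Polynomial.C (B x x)) (by rw [Polynomial.degree_quadratic hyy]; decide)
        refine ⟨x + t • y, W.add_mem hx (W.smul_mem _ hy), hxy t, ?_⟩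
        simp [Polynomial.IsRoot] at ht
        simp [hB y x]
        linear_combination ht
    obtain ⟨v, hvW, hv0, hv⟩ := this
    obtain ⟨φ, hφ⟩ := exists_fun_ne (k := k) hv0
    obtain ⟨U, hU, hUm, hUB⟩ := ih ((W ⊓ LinearMap.ker (B v)) ⊓ LinearMap.ker φ) (by
      have := hyper_fr W (B v)
      have := hyper_fr (W ⊓ LinearMap.ker (B v)) φ
      omega)
    have hvU : v ∉ U := fun h => hφ (hU h).2
    refine ⟨U ⊔ Submodule.span k {v}, ?_, ?_, ?_⟩
    · apply sup_le (hU.trans (inf_le_left.trans inf_le_left))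
      simpa using hvW
    · rw [sup_fr U v hvU, hUm]
    · intro u hu
      obtain ⟨a, ha, b, hb, rfl⟩ := Submodule.mem_sup.1 hu
      obtain ⟨c, rfl⟩ := Submodule.mem_span_singleton.1 hb
      have h1 : B v a = 0 := (hU ha).1.2
      simp [hB a v, h1, hUB a ha, hv]

lemma iso_cubic (F : V →ₗ[k] V →ₗ[k] V →ₗ[k] k) (h12 : ∀ x y z, F x y z = F y x z)
    (h23 : ∀ x y z, F x y z = F x z y) (d : ℕ) :
    ∀ W : Submodule k V, 2 ^ (d + 1) - 2 ≤ finrank k W →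
    ∃ U ≤ W, finrank k U = d ∧ ∀ u ∈ U, F u u u = 0 := by
  induction d with
  | zero => 
    intro W _
    exact ⟨⊥, bot_le, by simp, by simp⟩
  | succ d ih =>
    intro W hW
    have hp : 2 ≤ 2 ^ (d + 1) := by
      rw [pow_succ]; have := Nat.one_le_two_pow (n := d); omega
    rw [pow_succ] at hW
    have : ∃ v ∈ W, v ≠ 0 ∧ F v v v = 0 := by
      obtain ⟨x, hx, y, hy, hy0, hxy⟩ := two_vec W (by omega)
      by_cases hyy : F y y y = 0
      · exact ⟨y, hy, hy0, hyy⟩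
      · obtain ⟨t, ht⟩ := IsAlgClosed.exists_root
          (Polynomial.C (F y y y) * Polynomial.X ^ 3 + Polynomial.C (3 * F x y y) * Polynomial.X ^ 2
            + Polynomial.C (3 * F x x y) * Polynomial.X
            + Polynomial.C (F x x x)) (by rw [Polynomial.degree_cubic hyy]; decide)
        refine ⟨x + t • y, W.add_mem hx (W.smul_mem _ hy), hxy t, ?_⟩
        simp [Polynomial.IsRoot] at ht
        simp [h12 y x, h23 x y x, h23 y y x]
        linear_combination ht
    obtain ⟨v, hvW, hv0, hv⟩ := this
    obtain ⟨φ, hφ⟩ := exists_fun_ne (k := k) hv0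
    obtain ⟨W2, hW2, hW2m, hW2B⟩ := iso_quad (F v) (h23 v) (2 ^ (d + 1) - 2)
      ((W ⊓ LinearMap.ker (F v v)) ⊓ LinearMap.ker φ) (by
      have := hyper_fr W (F v v)
      have := hyper_fr (W ⊓ LinearMap.ker (F v v)) φ
      omega)
    obtain ⟨U, hU, hUm, hUB⟩ := ih W2 hW2m.ge
    have hvU : v ∉ U := fun h => hφ (hW2 (hU h)).2
    refine ⟨U ⊔ Submodule.span k {v}, ?_, ?_, ?_⟩
    · apply sup_le (hU.trans (hW2.trans (inf_le_left.trans inf_le_left)))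
      simpa using hvW
    · rw [sup_fr U v hvU, hUm]
    · intro u hu
      obtain ⟨a, ha, b, hb, rfl⟩ := Submodule.mem_sup.1 hu
      obtain ⟨c, rfl⟩ := Submodule.mem_span_singleton.1 hb
      have h1 : F v v a = 0 := (hW2 (hU ha)).1.2
      have h2 : F v a a = 0 := hW2B a (hU ha)
      simp [h12 a v, h23 v a v, h1, h2, h23 a a v, hUB a ha, hv]

end Iso
section Tri
open Module

noncomputable def triM {k : Type*} (R : Type*) [CommRing k] [CommRing R] [Algebra k R] {n : ℕ}
    (T : Fin n → Fin n → Fin n → k) :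
    (Fin n → R) →ₗ[R] (Fin n → R) →ₗ[R] (Fin n → R) →ₗ[R] R :=
  ∑ i, ∑ j, ∑ l, (LinearMap.proj i : (Fin n → R) →ₗ[R] R).smulRight
    ((LinearMap.proj j : (Fin n → R) →ₗ[R] R).smulRight
      (algebraMap k R (T i j l) • (LinearMap.proj l : (Fin n → R) →ₗ[R] R)))

variable {k R S : Type*} [CommRing k] [CommRing R] [Algebra k R] [CommRing S] [Algebra k S] {n : ℕ}
    (T : Fin n → Fin n → Fin n → k)

lemma triM_apply (x y z : Fin n → R) :
    triM R T x y z = ∑ i, ∑ j, ∑ l, algebraMap k R (T i j l) * x i * y j * z l := by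
  simp only [triM, LinearMap.sum_apply, LinearMap.smulRight_apply, LinearMap.smul_apply,
    LinearMap.proj_apply, smul_eq_mul]
  refine Finset.sum_congr rfl fun i _ => Finset.sum_congr rfl fun j _ =>
    Finset.sum_congr rfl fun l _ => by ring

lemma triM_hom (φ : R →ₐ[k] S) (x y z : Fin n → R) :
    φ (triM R T x y z) = triM S T (fun i => φ (x i)) (fun i => φ (y i)) (fun i => φ (z i)) := by
  simp [triM_apply]

lemma triM_deriv (D : Derivation k R R) (x y z : Fin n → R) :
    D (triM R T x y z) = triM R T (fun i => D (x i)) y z + triM R T x (fun i => D (y i)) z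
      + triM R T x y (fun i => D (z i)) := by
  simp only [triM_apply, map_sum, ← Finset.sum_add_distrib]
  refine Finset.sum_congr rfl fun i _ => Finset.sum_congr rfl fun j _ =>
    Finset.sum_congr rfl fun l _ => ?_
  simp
  ring

def TSym (T : Fin n → Fin n → Fin n → k) : Prop :=
  (∀ i j l, T i j l = T j i l) ∧ (∀ i j l, T i j l = T i l j)

variable {T}

lemma TSym.t12 (h : TSym T) (x y z : Fin n → R) : triM R T x y z = triM R T y x z := by
  rw [triM_apply, triM_apply, Finset.sum_comm]
  refine Finset.sum_congr rfl fun i _ => Finset.sum_congr rfl fun j _ =>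
    Finset.sum_congr rfl fun l _ => ?_
  rw [h.1]; ring

lemma TSym.t23 (h : TSym T) (x y z : Fin n → R) : triM R T x y z = triM R T x z y := by
  rw [triM_apply, triM_apply]
  refine Finset.sum_congr rfl fun i _ => ?_
  rw [Finset.sum_comm]
  refine Finset.sum_congr rfl fun j _ =>
    Finset.sum_congr rfl fun l _ => ?_
  rw [h.2]; ring

open MvPolynomial in
lemma triM_homog (T : Fin n → Fin n → Fin n → k) {σ : Type*} {a b c : ℕ}
    {x y z : Fin n → MvPolynomial σ k}
    (hx : ∀ i, (x i).IsHomogeneous a) (hy : ∀ i, (y i).IsHomogeneous b)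
    (hz : ∀ i, (z i).IsHomogeneous c) :
    (triM (MvPolynomial σ k) T x y z).IsHomogeneous (a + b + c) := by
  rw [triM_apply]
  refine IsHomogeneous.sum _ _ _ fun i _ => IsHomogeneous.sum _ _ _ fun j _ =>
    IsHomogeneous.sum _ _ _ fun l _ => ?_
  have := (((isHomogeneous_C σ (T i j l)).mul (hx i)).mul (hy j)).mul (hz l)
  simpa using this

end Tri

section Tensor
open MvPolynomial
variable {k : Type*} [Field k] {n : ℕ}

lemma pderiv_swap (i j : Fin n) (f : MvPolynomial (Fin n) k) :
    pderiv i (pderiv j f) = pderiv j (pderiv i f) := by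
  have : ⁅(pderiv i : Derivation k (MvPolynomial (Fin n) k) (MvPolynomial (Fin n) k)),
      (pderiv j : Derivation k (MvPolynomial (Fin n) k) (MvPolynomial (Fin n) k))⁆ = 0 := by
    apply MvPolynomial.derivation_ext
    intro l
    rw [Derivation.commutator_apply]
    simp [pderiv_X, Pi.single_apply]
    split_ifs <;> simp
  have h2 := congrArg (fun D : Derivation k (MvPolynomial (Fin n) k) (MvPolynomial (Fin n) k) => D f) this
  simp only [Derivation.commutator_apply, Derivation.zero_apply] at h2
  exact sub_eq_zero.1 h2

lemma tensor_exists (h2 : (2 : k) ≠ 0) (h3 : (3 : k) ≠ 0) (f : MvPolynomial (Fin n) k)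
    (hf : f.IsHomogeneous 3) :
    ∃ T : Fin n → Fin n → Fin n → k, TSym T ∧ f = triM (MvPolynomial (Fin n) k) T X X X := by
  refine ⟨fun i j l => (6 : k)⁻¹ * coeff 0 (pderiv l (pderiv j (pderiv i f))), ⟨?_, ?_⟩, ?_⟩
  · intro i j l
    simp only [pderiv_swap i j]
  · intro i j l
    simp only [pderiv_swap l j]
  · have e1 := hf.sum_X_mul_pderiv
    have e2 : ∀ i, ∑ j, X j * pderiv j (pderiv i f) = 2 • pderiv i f := fun i =>
      (hf.pderiv (i := i)).sum_X_mul_pderiv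
    have e3 : ∀ i j, ∑ l, X l * pderiv l (pderiv j (pderiv i f)) = 1 • pderiv j (pderiv i f) := fun i j =>
      ((hf.pderiv (i := i)).pderiv (i := j)).sum_X_mul_pderiv
    have e4 : ∀ i j l, pderiv l (pderiv j (pderiv i f)) =
        C (coeff 0 (pderiv l (pderiv j (pderiv i f)))) := fun i j l => by
      apply totalDegree_eq_zero_iff_eq_C.1
      have := (((hf.pderiv (i := i)).pderiv (i := j)).pderiv (i := l)).totalDegree_le
      omega
    have h6 : (6 : k) ≠ 0 := by
      have : (6 : k) = 2 * 3 := by norm_num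
      rw [this]; exact mul_ne_zero h2 h3
    have e5 : C 6 * f = ∑ i, ∑ j, ∑ l, X i * X j * X l * pderiv l (pderiv j (pderiv i f)) := by
      have : (C 6 : MvPolynomial (Fin n) k) * f = 2 • (3 • f) := by
        rw [← mul_smul, nsmul_eq_mul]
        congr 1
      rw [this, ← e1, Finset.smul_sum]
      refine Finset.sum_congr rfl fun i _ => ?_
      rw [← mul_smul_comm, ← e2, Finset.mul_sum]
      refine Finset.sum_congr rfl fun j _ => ?_
      have e3' := e3 i j
      rw [one_smul] at e3'
      conv_lhs => rw [← e3', Finset.mul_sum, Finset.mul_sum]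
      refine Finset.sum_congr rfl fun l _ => ?_
      ring
    have e6 : f = C (6 : k)⁻¹ * (C 6 * f) := by
      rw [← mul_assoc, ← C_mul, inv_mul_cancel₀ h6]; simp
    conv_lhs => rw [e6, e5]
    rw [triM_apply]
    simp only [Finset.mul_sum]
    refine Finset.sum_congr rfl fun i _ => Finset.sum_congr rfl fun j _ =>
      Finset.sum_congr rfl fun l _ => ?_
    conv_lhs => rw [e4 i j l]
    rw [algebraMap_eq, C_mul]
    ring

lemma triM_eval {σ : Type*} (T : Fin n → Fin n → Fin n → k) (x y z : Fin n → MvPolynomial σ k)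
    (v : σ → k) : eval v (triM (MvPolynomial σ k) T x y z) =
      triM k T (fun i => eval v (x i)) (fun i => eval v (y i)) (fun i => eval v (z i)) := by
  simp [triM_apply]

lemma tri_eval {T : Fin n → Fin n → Fin n → k} {f : MvPolynomial (Fin n) k}
    (h : f = triM (MvPolynomial (Fin n) k) T X X X) (v : Fin n → k) :
    eval v f = triM k T v v v := by
  have := triM_hom T (MvPolynomial.aeval v : MvPolynomial (Fin n) k →ₐ[k] k) X X X
  rw [← h] at this
  simpa [MvPolynomial.aeval_eq_eval] using this

open Module in
lemma qrank_le [Infinite k] {T : Fin n → Fin n → Fin n → k} {f : MvPolynomial (Fin n) k}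
    (h : f = triM (MvPolynomial (Fin n) k) T X X X) (L : Submodule k (Fin n → k)) (c : ℕ)
    (hL : n ≤ finrank k L + c) (hz : ∀ v ∈ L, triM k T v v v = 0) :
    polyQRank f ≤ c := by
  obtain ⟨M, hM⟩ := L.exists_isCompl
  have hfr := Submodule.finrank_add_eq_of_isCompl hM
  have hMc : finrank k M ≤ c := by simp at hfr; omega
  let b := finBasis k M
  let m := finrank k M
  -- coordinates
  let P : (Fin n → k) →ₗ[k] M := Submodule.projectionOnto M L hM.symm
  let lin : Fin m → (Fin n → k) →ₗ[k] k := fun i => b.coord i ∘ₗ P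
  have key : ∀ v, v - ∑ i, lin i v • (b i : Fin n → k) ∈ L := by
    intro v
    have : ∑ i, lin i v • (b i : Fin n → k) = P v := by
      have h1 := congrArg M.subtype (b.sum_repr (P v))
      rw [map_sum] at h1
      simp only [map_smul, Submodule.subtype_apply] at h1
      exact h1
    rw [this]
    have h3 : P (v - P v) = 0 := by
      rw [map_sub, sub_eq_zero]
      exact (Submodule.projectionOnto_apply_left hM.symm (P v)).symm
    exact (Submodule.projectionOnto_apply_eq_zero_iff hM.symm).1 h3
  let R := MvPolynomial (Fin n) k
  let ℓ : Fin m → R := fun i => ∑ j, C (lin i (Pi.single j 1)) * X j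
  have hℓ : ∀ i v, eval v (ℓ i) = lin i v := by
    intro i v
    rw [LinearMap.pi_apply_eq_sum_univ (lin i) v]
    simp only [ℓ, map_sum, map_mul, eval_C, eval_X, smul_eq_mul]
    refine Finset.sum_congr rfl fun j _ => ?_
    rw [mul_comm]
    congr 2
    ext a
    simp [Pi.single_apply, eq_comm]
  have hℓh : ∀ i, (ℓ i).IsHomogeneous 1 := fun i =>
    IsHomogeneous.sum _ _ _ fun j _ => by
      simpa using (isHomogeneous_C _ (lin i (Pi.single j 1))).mul (isHomogeneous_X k j)
  let e : Fin m → Fin n → R := fun i j => C ((b i : Fin n → k) j)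
  have he : ∀ i j, (e i j).IsHomogeneous 0 := fun i j => isHomogeneous_C _ _
  let s : Fin n → R := ∑ i, ℓ i • e i
  let π : Fin n → R := X - s
  have hπ : ∀ j, (π j).IsHomogeneous 1 := by
    intro j
    simp only [π, s, Pi.sub_apply, Finset.sum_apply, Pi.smul_apply, smul_eq_mul]
    exact (isHomogeneous_X k j).sub (IsHomogeneous.sum _ _ _ fun i _ => (hℓh i).mul (he i j))
  have hX : ∀ j : Fin n, (X j : R).IsHomogeneous 1 := fun j => isHomogeneous_X k j
  let q : Fin m → R := fun i => triM R T (e i) X X + triM R T π (e i) X + triM R T π π (e i)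
  have hq : ∀ i, (q i).IsHomogeneous 2 := fun i => by
    have a1 := triM_homog T (he i) hX hX
    have a2 := triM_homog T hπ (he i) hX
    have a3 := triM_homog T hπ hπ (he i)
    exact (a1.add a2).add a3
  have h0 : triM R T π π π = 0 := by
    apply MvPolynomial.funext
    intro v
    rw [triM_eval, map_zero]
    apply hz
    convert key v using 1
    ext j
    simp [π, s, e, hℓ]
  have hfin : f = ∑ i, ℓ i * q i := by
    have hXs : (X : Fin n → R) = π + s := by simp [π]
    have : f = triM R T s X X + triM R T π s X + triM R T π π s := by
      rw [h]
      have a1 : triM R T X X X = triM R T s X X + triM R T π X X := by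
        conv_lhs => rw [show triM R T X = triM R T (π + s) from congrArg _ hXs]
        simp [add_comm]
      have a2 : triM R T π X X = triM R T π s X + triM R T π π X := by
        conv_lhs => rw [show triM R T π X = triM R T π (π + s) from congrArg _ hXs]
        simp [add_comm]
      have a3 : triM R T π π X = triM R T π π s + triM R T π π π := by
        conv_lhs => rw [show triM R T π π X = triM R T π π (π + s) from congrArg _ hXs]
        simp [add_comm]
      rw [a1, a2, a3, h0]; ring
    rw [this]
    simp only [s, map_sum, LinearMap.sum_apply, map_smul, LinearMap.smul_apply, smul_eq_mul, q,
      mul_add, Finset.sum_add_distrib]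
  refine le_trans (sInf_le ⟨m, rfl, ℓ, q, hℓh, hq, hfin⟩) ?_
  exact_mod_cast hMc

end Tensor
section Clos
open MvPolynomial
variable {k : Type*} [Field k] {n : ℕ}

noncomputable def subst (M : Matrix (Fin n) (Fin n) k) (f : MvPolynomial (Fin n) k) :
    MvPolynomial (Fin n) k :=
  MvPolynomial.aeval (fun j => ∑ i, C (M i j) * X i) f

lemma family [Infinite k] (G : Polynomial (MvPolynomial (Fin n) k)) (P : MvPolynomial (Fin n →₀ ℕ) k)
    (S : Set k) (hS : S.Infinite)
    (h : ∀ t ∈ S, eval (fun m => coeff m (G.eval (C t))) P = 0) (t : k) :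
    eval (fun m => coeff m (G.eval (C t))) P = 0 := by
  let Q : Polynomial k := MvPolynomial.aeval
    (fun m => ∑ j ∈ G.support, Polynomial.C (coeff m (G.coeff j)) * Polynomial.X ^ j) P
  have hQ : ∀ t, Q.eval t = eval (fun m => coeff m (G.eval (C t))) P := by
    intro t
    have h1 : (Polynomial.aeval t) Q = MvPolynomial.aeval (fun m => coeff m (G.eval (C t))) P := by
      rw [← AlgHom.comp_apply, MvPolynomial.comp_aeval]
      congr 2
      ext m
      rw [Polynomial.eval_eq_sum, Polynomial.sum, coeff_sum]
      simp only [map_sum, map_mul, map_pow, Polynomial.aeval_C, Polynomial.aeval_X]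
      refine Finset.sum_congr rfl fun j _ => ?_
      rw [← C_pow, mul_comm (G.coeff j), coeff_C_mul, mul_comm]
      rfl
    rw [← MvPolynomial.aeval_eq_eval, ← Polynomial.coe_aeval_eq_eval]
    exact h1
  have : Q = 0 := Polynomial.eq_zero_of_infinite_isRoot Q
    (hS.mono fun t ht => by
      show Q.eval t = 0
      rw [hQ]; exact h t ht)
  rw [← hQ, this]; simp

noncomputable def pencil (M N : Matrix (Fin n) (Fin n) k) (f : MvPolynomial (Fin n) k) :
    Polynomial (MvPolynomial (Fin n) k) :=
  MvPolynomial.aeval (fun j => ∑ i, (Polynomial.C (C (M i j) * X i) +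
    Polynomial.X * Polynomial.C (C (N i j) * X i))) f

lemma pencil_eval (M N : Matrix (Fin n) (Fin n) k) (f : MvPolynomial (Fin n) k) (t : k) :
    (pencil M N f).eval (C t) = subst (M + t • N) f := by
  have h : ((Polynomial.aeval (C t : MvPolynomial (Fin n) k)).restrictScalars k) (pencil M N f)
      = subst (M + t • N) f := by
    rw [pencil, ← AlgHom.comp_apply, MvPolynomial.comp_aeval, subst]
    congr 2
    ext1 j
    simp only [map_sum, AlgHom.restrictScalars_apply, map_add, map_mul, Polynomial.aeval_X,
      Polynomial.aeval_C, Algebra.algebraMap_self, RingHom.id_apply]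
    refine Finset.sum_congr rfl fun i _ => ?_
    simp
    ring
  exact h

lemma orbit_subst [Infinite k] (f : MvPolynomial (Fin n) k) (P : MvPolynomial (Fin n →₀ ℕ) k)
    (hP : ∀ g ∈ glOrbit f, eval (fun m => coeff m g) P = 0) (M : Matrix (Fin n) (Fin n) k) :
    eval (fun m => coeff m (subst M f)) P = 0 := by
  have := family (pencil M 1 f) P {t | (M + t • (1 : Matrix (Fin n) (Fin n) k)).det ≠ 0} ?_ ?_ 0
  · rwa [pencil_eval, zero_smul, add_zero] at this
  · have h1 : {t : k | (-M).charpoly.IsRoot t}.Finite :=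
      Polynomial.finite_setOfPred_isRoot (Matrix.charpoly_monic (-M)).ne_zero
    have := h1.infinite_compl
    refine this.mono fun t ht => ?_
    simp only [Set.mem_compl_iff, Set.mem_ofPred_eq, Polynomial.IsRoot, Matrix.eval_charpoly] at ht ⊢
    convert ht using 2
    rw [sub_neg_eq_add, add_comm, Matrix.scalar_apply, Matrix.smul_one_eq_diagonal]
  · intro t ht
    apply hP
    refine ⟨Matrix.GeneralLinearGroup.mkOfDetNeZero _ ht, ?_⟩
    rw [pencil_eval]
    rfl

lemma subst_eval {T : Fin n → Fin n → Fin n → k} {f : MvPolynomial (Fin n) k}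
    (h : f = triM (MvPolynomial (Fin n) k) T X X X) (M : Matrix (Fin n) (Fin n) k)
    (x : Fin n → k) :
    eval x (subst M f) = triM k T (Matrix.vecMul x M) (Matrix.vecMul x M) (Matrix.vecMul x M) := by
  rw [← tri_eval h, subst, ← MvPolynomial.aeval_eq_eval, ← MvPolynomial.aeval_eq_eval]
  rw [← AlgHom.comp_apply, MvPolynomial.comp_aeval]
  congr 2
  ext j
  simp [Matrix.vecMul, dotProduct, mul_comm]

lemma clos_coeff [IsAlgClosed k] {T : Fin n → Fin n → Fin n → k} {f : MvPolynomial (Fin n) k}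
    (h : f = triM (MvPolynomial (Fin n) k) T X X X) (U V : Matrix (Fin n) (Fin n) k)
    (hU : subst U f = 0) : InZariskiClosure (glOrbit f) ((pencil U V f).coeff 1) := by
  have : Infinite k := IsAlgClosed.instInfinite
  intro P hP
  have h0 : (pencil U V f).coeff 0 = 0 := by
    have := pencil_eval U V f 0
    rw [zero_smul, add_zero, hU, C_0] at this
    rw [Polynomial.coeff_zero_eq_eval_zero, this]
  have hX : (pencil U V f).divX * Polynomial.X = pencil U V f := by
    have := Polynomial.divX_mul_X_add (pencil U V f)
    rwa [h0, Polynomial.C_0, add_zero] at this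
  have := family (pencil U V f).divX P {t | t ≠ 0} (by
      have := (Set.finite_singleton (0 : k)).infinite_compl
      exact this) ?_ 0
  · rw [C_0, ← Polynomial.coeff_zero_eq_eval_zero, Polynomial.coeff_divX] at this
    simpa using this
  · intro t ht
    obtain ⟨c, hc⟩ := IsAlgClosed.exists_pow_nat_eq (t⁻¹) (n := 3) (by norm_num)
    have : (pencil U V f).divX.eval (C t) = subst (c • (U + t • V)) f := by
      have h1 := congrArg (Polynomial.eval (C t)) hX
      rw [Polynomial.eval_mul, Polynomial.eval_X, pencil_eval] at h1
      apply MvPolynomial.funext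
      intro x
      have h2 := congrArg (eval x) h1
      rw [map_mul, eval_C, subst_eval h] at h2
      rw [subst_eval h]
      simp only [Matrix.vecMul_smul, map_smul, LinearMap.smul_apply, smul_eq_mul]
      rw [← h2]
      have : c * (c * c) * t = 1 := by
        have : c * (c * c) = c ^ 3 := by ring
        rw [this, hc]; exact inv_mul_cancel₀ ht
      linear_combination (-(eval x) (Polynomial.eval (C t) (pencil U V f).divX)) * this
    rw [this]
    exact orbit_subst f P hP _

lemma pencil_coeff [Infinite k] {T : Fin n → Fin n → Fin n → k} (hT : TSym T)
    {f : MvPolynomial (Fin n) k}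
    (h : f = triM (MvPolynomial (Fin n) k) T X X X) (U V : Matrix (Fin n) (Fin n) k)
    (x : Fin n → k) :
    eval x ((pencil U V f).coeff 1) =
      3 * triM k T (Matrix.vecMul x U) (Matrix.vecMul x U) (Matrix.vecMul x V) := by
  set u := Matrix.vecMul x U
  set v := Matrix.vecMul x V
  have : (pencil U V f).map (eval x) = Polynomial.C (triM k T u u u)
      + Polynomial.C (3 * triM k T u u v) * Polynomial.X
      + Polynomial.C (3 * triM k T u v v) * Polynomial.X ^ 2
      + Polynomial.C (triM k T v v v) * Polynomial.X ^ 3 := by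
    apply Polynomial.funext
    intro t
    have h1 : ((pencil U V f).map (eval x)).eval t = eval x ((pencil U V f).eval (C t)) := by
      rw [Polynomial.eval_map, Polynomial.eval, Polynomial.hom_eval₂]
      simp
    rw [h1, pencil_eval, subst_eval h, Matrix.vecMul_add, Matrix.vecMul_smul]
    change triM k T (u + t • v) (u + t • v) (u + t • v) = _
    simp [hT.t12 v u, hT.t23 u v u, hT.t23 v v u]
    ring
  rw [← Polynomial.coeff_map, this]
  simp only [Polynomial.coeff_add, Polynomial.coeff_C_mul, Polynomial.coeff_X_pow,
    Polynomial.coeff_X, Polynomial.coeff_C]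
  simp

end Clos
section Generic
open MvPolynomial Module
variable {k : Type*} [Field k] {n : ℕ}

lemma clear_denoms {A K ι : Type*} [CommRing A] [IsDomain A] [Field K] [Algebra A K]
    [IsFractionRing A K] [Finite ι] (g : ι → K) :
    ∃ δ : A, δ ≠ 0 ∧ ∃ g' : ι → A, ∀ i, algebraMap A K (g' i) = algebraMap A K δ * g i := by
  obtain ⟨b, hb⟩ := IsLocalization.exist_integer_multiples_of_finite (nonZeroDivisors A) g
  choose g' hg' using hb
  refine ⟨b, nonZeroDivisors.coe_ne_zero b, g', fun i => ?_⟩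
  rw [hg' i, Algebra.smul_def]

lemma exists_eval_ne [Infinite k] {σ : Type*} {p : MvPolynomial σ k} (hp : p ≠ 0) :
    ∃ x, eval x p ≠ 0 := by
  by_contra! h
  exact hp (MvPolynomial.funext (by simpa using h))

/-- the derivation part -/
lemma deriv_part (h2 : (2 : k) ≠ 0) {N : ℕ} {T : Fin n → Fin n → Fin n → k} (hT : TSym T)
    (w : Fin N → Fin n → MvPolynomial (Fin N × Fin n) k) (hw : ∀ a i, w a i = X (a, i))
    (c : Fin N → Fin N → MvPolynomial (Fin N × Fin n) k) (hc : ∀ a b, c a b = c b a)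
    (hcz : ∀ z, ∑ a, ∑ b, c a b * triM _ T (w a) (w b) z = 0)
    (κ κ' : Fin n → MvPolynomial (Fin N × Fin n) k)
    (hκ : ∀ a b, triM _ T (w a) (w b) κ = 0) (hκ' : ∀ a b, triM _ T (w a) (w b) κ' = 0)
    (a b : Fin N) (j : Fin n) :
    triM _ T (∑ b', pderiv (b, j) (c a b') • w b' + c a b • Pi.single j 1) κ' κ = 0 := by
  have hD : ∀ (b : Fin N) (j : Fin n) a, (fun i => pderiv (b, j) (w a i)) =
      if a = b then (Pi.single j 1 : Fin n → (MvPolynomial (Fin N × Fin n) k)) else 0 := by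
    intro b j a
    ext1 i
    rw [hw, pderiv_X]
    by_cases hab : a = b <;> by_cases hij : i = j <;> simp [hab, hij, Pi.single_apply]
  have two : (2 : (MvPolynomial (Fin N × Fin n) k)) ≠ 0 := by
    have : (2 : (MvPolynomial (Fin N × Fin n) k)) = C 2 := (map_ofNat C 2).symm
    rw [this]; simpa using h2
  let u : Fin N → Fin n → (MvPolynomial (Fin N × Fin n) k) := fun b => ∑ a', c b a' • w a'
  have c1 : ∀ κ : Fin n → (MvPolynomial (Fin N × Fin n) k), (∀ a b, triM _ T (w a) (w b) κ = 0) → ∀ b i,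
      triM _ T (u b) (Pi.single i 1) κ = 0 := by
    intro κ hκ b i
    have h1 := congrArg (pderiv (b, i)) (hcz κ)
    simp only [map_sum, Derivation.leibniz, triM_deriv] at h1
    simp only [hκ, smul_eq_mul, zero_mul, add_zero, Finset.sum_const_zero,
      map_zero, hD, mul_add, Finset.sum_add_distrib] at h1
    rw [hcz, add_zero] at h1
    have e1 : ∑ x, ∑ y, c x y * triM (MvPolynomial (Fin N × Fin n) k) T (if x = b then Pi.single i 1 else 0) (w y) κ
        = triM _ T (u b) (Pi.single i 1) κ := by
      rw [Finset.sum_eq_single b]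
      · simp [u, hT.t12 (Pi.single i 1 : Fin n → (MvPolynomial (Fin N × Fin n) k))]
      · intro x _ hx; simp [hx]
      · simp
    have e2 : ∑ x, ∑ y, c x y * triM (MvPolynomial (Fin N × Fin n) k) T (w x) (if y = b then Pi.single i 1 else 0) κ
        = triM _ T (u b) (Pi.single i 1) κ := by
      rw [Finset.sum_comm, Finset.sum_eq_single b]
      · simp [u, hc b]
      · intro x _ hx; simp [hx]
      · simp
    rw [e1, e2] at h1
    have : 2 * triM (MvPolynomial (Fin N × Fin n) k) T (u b) (Pi.single i 1) κ = 0 := by linear_combination h1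
    exact (mul_eq_zero.1 this).resolve_left two
  have c2 : ∀ κ : Fin n → (MvPolynomial (Fin N × Fin n) k), (∀ a b, triM _ T (w a) (w b) κ = 0) → ∀ b v,
      triM _ T (u b) v κ = 0 := by
    intro κ hκ b v
    rw [← Finset.univ_sum_single v]
    simp only [map_sum, LinearMap.sum_apply]
    refine Finset.sum_eq_zero fun i _ => ?_
    have : (Pi.single i (v i) : Fin n → (MvPolynomial (Fin N × Fin n) k)) = v i • Pi.single i 1 := by
      rw [← Pi.single_smul]; simp
    rw [this]
    simp [c1 κ hκ b i]
  have h3 := congrArg (pderiv (b, j)) (c2 κ hκ a κ')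
  rw [triM_deriv, c2 κ hκ, hT.t23 (u a) κ', c2 κ' hκ', map_zero, add_zero, add_zero] at h3
  convert h3 using 4
  ext1 i
  have h4 : ∀ x, pderiv (b, j) (w x i) = (if x = b then (Pi.single j 1 : Fin n → (MvPolynomial (Fin N × Fin n) k)) else 0) i :=
    fun x => congrFun (hD b j x) i
  simp only [u, Finset.sum_apply, Pi.smul_apply, smul_eq_mul, map_sum, Derivation.leibniz, h4,
    Finset.sum_add_distrib, Pi.add_apply]
  rw [Finset.sum_eq_single b (f := fun x => c a x * _)]
  · simp [add_comm, mul_comm]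
  · intro x _ hx; simp [hx]
  · simp

end Generic

section Generic2
open MvPolynomial Module
variable {k : Type*} [Field k] {n : ℕ}

lemma gen_finish [Infinite k] {N m : ℕ} {T : Fin n → Fin n → Fin n → k}
    {f : MvPolynomial (Fin n) k} (h : f = triM (MvPolynomial (Fin n) k) T X X X)
    (w : Fin N → Fin n → k) (κ : Fin m → Fin n → k) (hκ : LinearIndependent k κ)
    (hm : n ≤ m + N * N)
    (hsp : ∀ j, ∃ γ : k, γ ≠ 0 ∧ ∃ s ∈ Submodule.span k (Set.range w),
      ∀ i i', triM k T (s + γ • Pi.single j 1) (κ i') (κ i) = 0) :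
    polyQRank f ≤ ((N * N + N : ℕ) : ℕ∞) := by
  let Kp := Submodule.span k (Set.range κ)
  let Sp := Submodule.span k (Set.range w)
  let Tp : Submodule k (Fin n → k) :=
    { carrier := {v | ∀ i i', triM k T v (κ i') (κ i) = 0}
      add_mem' := fun {a b} ha hb i i' => by simp [ha i i', hb i i']
      zero_mem' := fun i i' => by simp
      smul_mem' := fun c x hx i i' => by simp [hx i i'] }
  have hK : finrank k Kp = m := by
    rw [finrank_span_eq_card hκ, Fintype.card_fin]
  have hS : finrank k Sp ≤ N := by
    simpa [Set.finrank] using finrank_range_le_card (R := k) w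
  have htop : Tp ⊔ Sp = ⊤ := by
    rw [eq_top_iff]
    have : ∀ j, (Pi.single j 1 : Fin n → k) ∈ Tp ⊔ Sp := by
      intro j
      obtain ⟨γ, hγ, s, hs, hz⟩ := hsp j
      have h1 : s + γ • (Pi.single j 1 : Fin n → k) ∈ Tp ⊔ Sp :=
        Submodule.mem_sup_left (show _ ∈ Tp from hz)
      have h2 : s ∈ Tp ⊔ Sp := Submodule.mem_sup_right hs
      have h3 := (Tp ⊔ Sp).sub_mem h1 h2
      rw [add_sub_cancel_left] at h3
      have h4 := (Tp ⊔ Sp).smul_mem γ⁻¹ h3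
      rwa [smul_smul, inv_mul_cancel₀ hγ, one_smul] at h4
    intro v _
    rw [← Finset.univ_sum_single v]
    refine Submodule.sum_mem _ fun i _ => ?_
    have h5 : (Pi.single i (v i) : Fin n → k) = v i • Pi.single i 1 := by
      rw [← Pi.single_smul]; simp
    rw [h5]
    exact Submodule.smul_mem _ _ (this i)
  have hT1 : n ≤ finrank k Tp + N := by
    have := Submodule.finrank_add_le_finrank_add_finrank Tp Sp
    rw [htop, finrank_top, finrank_fin_fun] at this
    omega
  refine qrank_le h (Kp ⊓ Tp) _ ?_ ?_
  · have h6 := Submodule.finrank_sup_add_finrank_inf_eq Kp Tp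
    have h7 := Submodule.finrank_le (Kp ⊔ Tp)
    rw [finrank_fin_fun] at h7
    omega
  · rintro v ⟨hv1, hv2⟩
    have hv2 : ∀ i i', triM k T v (κ i') (κ i) = 0 := hv2
    have a1 : ∀ i', ∀ y ∈ Kp, triM k T v (κ i') y = 0 := by
      intro i' y hy
      have : Kp ≤ LinearMap.ker (triM k T v (κ i')) := by
        refine Submodule.span_le.2 ?_
        rintro _ ⟨i, rfl⟩
        exact hv2 i i'
      exact this hy
    have a2 : Kp ≤ LinearMap.ker ((triM k T v).flip v) := by
      refine Submodule.span_le.2 ?_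
      rintro _ ⟨i, rfl⟩
      exact a1 i v hv1
    exact a2 hv1

lemma gen_case1 [Infinite k] (h2 : (2 : k) ≠ 0) {N : ℕ} {T : Fin n → Fin n → Fin n → k}
    {K : Type*} [Field K] [Algebra (MvPolynomial (Fin N × Fin n) k) K] [Algebra k K]
    [IsScalarTower k (MvPolynomial (Fin N × Fin n) k) K]
    [IsFractionRing (MvPolynomial (Fin N × Fin n) k) K]
    (w : Fin N → Fin n → MvPolynomial (Fin N × Fin n) k)
    (v : Fin N × Fin N → Fin n → K)
    (hv : ∀ s a b, triM K T (fun i => algebraMap _ K (w a i)) (fun i => algebraMap _ K (w b i)) (v s)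
      = (if a = s.1 ∧ b = s.2 then 1 else 0) + (if a = s.2 ∧ b = s.1 then 1 else 0)) :
    ∃ w : Fin N → Fin n → k, ∀ S : Fin N → Fin N → k,
      (∀ a b, S a b = S b a) → ∃ v, ∀ a b, triM k T (w a) (w b) v = S a b := by
  obtain ⟨δ, hδ, v', hv'⟩ := clear_denoms (A := MvPolynomial (Fin N × Fin n) k)
    (fun q : (Fin N × Fin N) × Fin n => v q.1 q.2)
  have e1 : ∀ s a b, triM _ T (w a) (w b) (fun i => v' (s, i)) =
      δ * ((if a = s.1 ∧ b = s.2 then 1 else 0) + (if a = s.2 ∧ b = s.1 then 1 else 0)) := by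
    intro s a b
    apply IsFractionRing.injective (MvPolynomial (Fin N × Fin n) k) K
    have := triM_hom T (IsScalarTower.toAlgHom k (MvPolynomial (Fin N × Fin n) k) K) (w a) (w b)
      (fun i => v' (s, i))
    simp only [IsScalarTower.coe_toAlgHom'] at this
    rw [this]
    have h3 : (fun i => algebraMap _ K (v' (s, i))) = algebraMap _ K δ • v s := by
      ext i; rw [hv']; rfl
    rw [h3, map_smul, hv, map_mul, smul_eq_mul]
    congr 1
    rw [map_add]
    split_ifs <;> simp
  obtain ⟨p, hp⟩ := exists_eval_ne hδ
  refine ⟨fun a i => eval p (w a i), fun S hS => ?_⟩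
  refine ⟨∑ s : Fin N × Fin N, (S s.1 s.2 / (2 * eval p δ)) • (fun i => eval p (v' (s, i))), ?_⟩
  intro a b
  have e2 : ∀ s, triM k T (fun i => eval p (w a i)) (fun i => eval p (w b i))
      (fun i => eval p (v' (s, i))) = eval p δ *
       ((if a = s.1 ∧ b = s.2 then 1 else 0) + (if a = s.2 ∧ b = s.1 then 1 else 0)) := by
    intro s
    rw [← triM_eval, e1, map_mul, map_add]
    congr 2 <;> split_ifs <;> simp
  simp only [map_sum, map_smul, e2, smul_eq_mul]
  have e3 : ∀ s : Fin N × Fin N, S s.1 s.2 / (2 * eval p δ) * (eval p δ *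
       ((if a = s.1 ∧ b = s.2 then 1 else 0) + (if a = s.2 ∧ b = s.1 then 1 else 0)))
      = (if (a, b) = s then S a b / 2 else 0) + (if (b, a) = s then S a b / 2 else 0) := by
    rintro ⟨x, y⟩
    simp only [Prod.mk.injEq]
    have h4 : ∀ c : k, S x y / (2 * eval p δ) * (eval p δ * c) = S x y / 2 * c := by
      intro c; field_simp
    rw [h4, mul_add]
    congr 1
    · split_ifs with h5
      · rw [h5.1, h5.2]; simp
      · simp
    · by_cases h5 : a = y ∧ b = x
      · rw [if_pos h5, if_pos h5.symm, h5.1, h5.2, hS]; simp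
      · rw [if_neg h5, if_neg (fun h => h5 h.symm)]; simp
  rw [Finset.sum_congr rfl (fun s _ => e3 s), Finset.sum_add_distrib]
  simp
  field_simp
  ring

end Generic2

section Generic3
open MvPolynomial Module
variable {k : Type*} [Field k] {n : ℕ}

lemma li_inv {m : ℕ} (κ : Fin m → Fin n → k) (hκ : LinearIndependent k κ) :
    ∃ B : Fin n → Fin m → k, ∀ i i', ∑ l, κ i l * B l i' = if i = i' then 1 else 0 := by
  have h1 : LinearMap.ker (Fintype.linearCombination k κ) = ⊥ :=
    LinearMap.ker_eq_bot.2 (linearIndependent_iff_injective_fintypeLinearCombination.1 hκ)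
  obtain ⟨g, hg⟩ := LinearMap.exists_leftInverse_of_injective _ h1
  refine ⟨fun l i' => g (Pi.single l 1) i', fun i i' => ?_⟩
  have h2 : g (κ i) = Pi.single i 1 := by
    have := LinearMap.congr_fun hg (Pi.single i 1)
    simpa using this
  have h3 : κ i = ∑ l, κ i l • (Pi.single l 1 : Fin n → k) := by
    conv_lhs => rw [← Finset.univ_sum_single (κ i)]
    refine Finset.sum_congr rfl fun l _ => ?_
    rw [← Pi.single_smul]; simp
  rw [h3, map_sum] at h2
  have h4 := congrFun h2 i'
  simp only [map_smul, Finset.sum_apply, Pi.smul_apply, smul_eq_mul, Pi.single_apply] at h4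
  simp only [eq_comm (a := i)]
  exact h4

lemma li_of_inv {m : ℕ} (κ : Fin m → Fin n → k) (B : Fin n → Fin m → k) (δ : k) (hδ : δ ≠ 0)
    (h : ∀ i i', ∑ l, κ i l * B l i' = if i = i' then δ else 0) : LinearIndependent k κ := by
  rw [Fintype.linearIndependent_iff]
  intro g hg i
  have h1 : ∑ l, (∑ i', g i' • κ i') l * B l i = 0 := by rw [hg]; simp
  simp only [Finset.sum_apply, Pi.smul_apply, smul_eq_mul, Finset.sum_mul] at h1
  rw [Finset.sum_comm] at h1
  simp only [mul_assoc, ← Finset.mul_sum, h] at h1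
  simp at h1
  exact h1.resolve_right hδ

lemma gen_case2 [Infinite k] (h2 : (2 : k) ≠ 0) {N : ℕ} {T : Fin n → Fin n → Fin n → k}
    (hT : TSym T) {f : MvPolynomial (Fin n) k}
    (h : f = triM (MvPolynomial (Fin n) k) T X X X)
    {K : Type*} [Field K] [Algebra (MvPolynomial (Fin N × Fin n) k) K] [Algebra k K]
    [IsScalarTower k (MvPolynomial (Fin N × Fin n) k) K]
    [IsFractionRing (MvPolynomial (Fin N × Fin n) k) K]
    (w : Fin N → Fin n → MvPolynomial (Fin N × Fin n) k) (hw : ∀ a i, w a i = X (a, i))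
    (c : Fin N → Fin N → K) (hc : ∀ a b, c a b = c b a) (a0 b0 : Fin N) (h0 : c a0 b0 ≠ 0)
    (hcz : ∀ z, ∑ a, ∑ b, c a b * triM K T (fun i => algebraMap _ K (w a i))
      (fun i => algebraMap _ K (w b i)) z = 0) :
    polyQRank f ≤ ((N * N + N : ℕ) : ℕ∞) := by
  have inj := IsFractionRing.injective (MvPolynomial (Fin N × Fin n) k) K
  have hom : ∀ x y z, algebraMap _ K (triM (MvPolynomial (Fin N × Fin n) k) T x y z) =
      triM K T (fun i => algebraMap _ K (x i)) (fun i => algebraMap _ K (y i))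
        (fun i => algebraMap _ K (z i)) := fun x y z =>
    triM_hom T (IsScalarTower.toAlgHom k (MvPolynomial (Fin N × Fin n) k) K) x y z
  -- clear denominators of c
  obtain ⟨δ0, hδ0, c', hc'⟩ := clear_denoms (A := MvPolynomial (Fin N × Fin n) k)
    (fun q : Fin N × Fin N => c q.1 q.2)
  have hcs : ∀ a b, c' (a, b) = c' (b, a) := fun a b => inj (by rw [hc', hc', hc])
  have hc0 : c' (a0, b0) ≠ 0 := by
    intro hh
    have := hc' (a0, b0)
    rw [hh, map_zero] at this
    exact mul_ne_zero ((map_ne_zero_iff _ inj).2 hδ0) h0 this.symm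
  have hcz' : ∀ z, ∑ a, ∑ b, c' (a, b) * triM _ T (w a) (w b) z = 0 := by
    intro z
    apply inj
    simp only [map_sum, map_mul, hom, hc', mul_assoc, ← Finset.mul_sum, hcz, mul_zero, map_zero]
  -- the kernel
  let Φ : (Fin n → K) →ₗ[K] (Fin N → Fin N → K) := LinearMap.pi fun a => LinearMap.pi fun b =>
    triM K T (fun i => algebraMap _ K (w a i)) (fun i => algebraMap _ K (w b i))
  have hker : n - N * N ≤ finrank K (LinearMap.ker Φ) := by
    have e1 := LinearMap.finrank_range_add_finrank_ker Φ
    have e2 := Submodule.finrank_le (LinearMap.range Φ)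
    rw [finrank_fin_fun] at e1
    rw [finrank_pi_fintype] at e2
    simp at e2
    omega
  obtain ⟨κ0, hκ0⟩ := exists_linearIndependent_of_le_finrank hker
  have hκ1 := hκ0.map' (LinearMap.ker Φ).subtype (Submodule.ker_subtype _)
  obtain ⟨B, hB⟩ := li_inv _ hκ1
  obtain ⟨δ1, hδ1, κ, hκ⟩ := clear_denoms (A := MvPolynomial (Fin N × Fin n) k)
    (fun q : Fin (n - N * N) × Fin n => (κ0 q.1 : Fin n → K) q.2)
  obtain ⟨δ2, hδ2, B', hB'⟩ := clear_denoms (A := MvPolynomial (Fin N × Fin n) k)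
    (fun q : Fin n × Fin (n - N * N) => B q.1 q.2)
  have hκB : ∀ i i', ∑ l, κ (i, l) * B' (l, i') = if i = i' then δ1 * δ2 else 0 := by
    intro i i'
    apply inj
    simp only [map_sum, map_mul, hκ, hB']
    have := hB i i'
    simp only [Function.comp, Submodule.subtype_apply] at this
    calc _ = ∑ l, algebraMap _ K δ1 * algebraMap _ K δ2 * ((κ0 i : Fin n → K) l * B l i') :=
          Finset.sum_congr rfl fun l _ => by ring
      _ = _ := by
        rw [← Finset.mul_sum, this]
        split_ifs <;> simp
  have hκz : ∀ i a b, triM _ T (w a) (w b) (fun l => κ (i, l)) = 0 := by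
    intro i a b
    apply inj
    rw [hom, map_zero]
    have h3 : (fun l => algebraMap _ K (κ (i, l))) = algebraMap _ K δ1 • (κ0 i : Fin n → K) := by
      ext l; rw [hκ]; rfl
    rw [h3, map_smul]
    have h4 := (κ0 i).2
    rw [LinearMap.mem_ker] at h4
    have h5 : triM K T (fun i => algebraMap _ K (w a i)) (fun i => algebraMap _ K (w b i))
      (κ0 i : Fin n → K) = 0 := congrFun (congrFun h4 a) b
    rw [h5, smul_zero]
  -- specialise
  obtain ⟨p, hp⟩ := exists_eval_ne (mul_ne_zero (mul_ne_zero hδ1 hδ2) hc0)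
  rw [map_mul] at hp
  refine gen_finish h (fun a i => eval p (w a i)) (fun i l => eval p (κ (i, l))) ?_ (by omega) ?_
  · refine li_of_inv _ (fun l i => eval p (B' (l, i))) (eval p (δ1 * δ2)) (left_ne_zero_of_mul hp) ?_
    intro i i'
    have := congrArg (eval p) (hκB i i')
    rw [map_sum] at this
    simp only [map_mul] at this ⊢
    rw [this]
    split_ifs <;> simp
  · intro j
    refine ⟨eval p (c' (a0, b0)), right_ne_zero_of_mul hp,
      ∑ b', eval p (pderiv (b0, j) (c' (a0, b'))) • (fun i => eval p (w b' i)),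
      Submodule.sum_mem _ fun b' _ => Submodule.smul_mem _ _ (Submodule.subset_span ⟨b', rfl⟩), ?_⟩
    intro i i'
    have h6 := congrArg (eval p) (deriv_part h2 hT w hw (fun a b => c' (a, b)) hcs hcz'
      (fun l => κ (i, l)) (fun l => κ (i', l)) (hκz i) (hκz i') a0 b0 j)
    rw [triM_eval, map_zero] at h6
    convert h6 using 4
    ext l
    by_cases hl : l = j <;> simp [Pi.single_apply, hl]

lemma generic_surj_aux (K : Type*) [Field K] [Infinite k] (h2 : (2 : k) ≠ 0) (N : ℕ) {T : Fin n → Fin n → Fin n → k}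
    (hT : TSym T) {f : MvPolynomial (Fin n) k}
    (h : f = triM (MvPolynomial (Fin n) k) T X X X)
    [Algebra (MvPolynomial (Fin N × Fin n) k) K] [Algebra k K]
    [IsScalarTower k (MvPolynomial (Fin N × Fin n) k) K]
    [IsFractionRing (MvPolynomial (Fin N × Fin n) k) K] :
    (∃ w : Fin N → Fin n → k, ∀ S : Fin N → Fin N → k,
      (∀ a b, S a b = S b a) → ∃ v, ∀ a b, triM k T (w a) (w b) v = S a b) ∨
    polyQRank f ≤ ((N * N + N : ℕ) : ℕ∞) := by
  let w : Fin N → Fin n → MvPolynomial (Fin N × Fin n) k := fun a i => X (a, i)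
  let Φ : (Fin n → K) →ₗ[K] (Fin N × Fin N → K) := LinearMap.pi fun s =>
    triM K T (fun i => algebraMap _ K (w s.1 i)) (fun i => algebraMap _ K (w s.2 i))
  let E : Fin N × Fin N → (Fin N × Fin N → K) := fun s => Pi.single s 1
  by_cases hcase : ∀ s : Fin N × Fin N, E s + E s.swap ∈ LinearMap.range Φ
  · left
    choose v hv using hcase
    refine gen_case1 h2 (K := K) w v ?_
    intro s a b
    have := congrFun (hv s) (a, b)
    change triM K T (fun i => algebraMap _ K (w a i)) (fun i => algebraMap _ K (w b i)) (v s) = _ at this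
    rw [this]
    obtain ⟨x, y⟩ := s
    simp [E, Pi.single_apply]
  · right
    push Not at hcase
    obtain ⟨s0, hs0⟩ := hcase
    obtain ⟨φ, hφ, hφ2⟩ := Submodule.exists_le_ker_of_notMem hs0
    have hφE : ∀ z, φ z = ∑ s, z s * φ (E s) := by
      intro z
      conv_lhs => rw [← Finset.univ_sum_single z]
      rw [map_sum]
      refine Finset.sum_congr rfl fun s _ => ?_
      rw [← smul_eq_mul, ← map_smul]
      congr 1
      simp only [E]
      rw [← Pi.single_smul]; simp
    refine gen_case2 h2 hT h (K := K) w (fun _ _ => rfl)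
      (fun a b => φ (E (a, b)) + φ (E (b, a))) (fun a b => add_comm _ _) s0.1 s0.2 ?_ ?_
    · rw [map_add] at hφ
      exact hφ
    · intro z
      have hz : ∑ s, Φ z s * φ (E s) = 0 := by
        rw [← hφE]; exact hφ2 ⟨z, rfl⟩
      rw [Fintype.sum_prod_type] at hz
      have hz2 := hz
      rw [Finset.sum_comm] at hz2
      have e : ∀ a b, Φ z (a, b) = triM K T (fun i => algebraMap _ K (w a i))
        (fun i => algebraMap _ K (w b i)) z := fun a b => rfl
      simp only [e] at hz hz2
      simp only [add_mul, Finset.sum_add_distrib]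
      rw [← add_zero (0 : K)]
      congr 1
      · rw [← hz]
        exact Finset.sum_congr rfl fun a _ => Finset.sum_congr rfl fun b _ => mul_comm _ _
      · rw [← hz2]
        refine Finset.sum_congr rfl fun a _ => Finset.sum_congr rfl fun b _ => ?_
        rw [hT.t12 (fun i => algebraMap _ K (w b i)), mul_comm]

lemma generic_surj [Infinite k] (h2 : (2 : k) ≠ 0) (N : ℕ) {T : Fin n → Fin n → Fin n → k}
    (hT : TSym T) {f : MvPolynomial (Fin n) k}
    (h : f = triM (MvPolynomial (Fin n) k) T X X X) :
    (∃ w : Fin N → Fin n → k, ∀ S : Fin N → Fin N → k,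
      (∀ a b, S a b = S b a) → ∃ v, ∀ a b, triM k T (w a) (w b) v = S a b) ∨
    polyQRank f ≤ ((N * N + N : ℕ) : ℕ∞) :=
  generic_surj_aux (FractionRing (MvPolynomial (Fin N × Fin n) k)) h2 N hT h

end Generic3

section Final
open MvPolynomial Module
variable {k : Type*} [Field k] {n : ℕ}

lemma triM_expand (T : Fin n → Fin n → Fin n → k) {m : ℕ} (x y z : Fin m → k)
    (u v w : Fin m → Fin n → k) :
    triM k T (∑ a, x a • u a) (∑ b, y b • v b) (∑ c, z c • w c) =
      ∑ a, ∑ b, ∑ c, x a * y b * z c * triM k T (u a) (v b) (w c) := by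
  have h1 : ∀ p q, triM k T (∑ a, x a • u a) p q = ∑ a, x a * triM k T (u a) p q := by
    intro p q
    simp only [map_sum, LinearMap.sum_apply, map_smul, LinearMap.smul_apply, smul_eq_mul]
  have h2 : ∀ p q, triM k T p (∑ b, y b • v b) q = ∑ b, y b * triM k T p (v b) q := by
    intro p q
    simp only [map_sum, LinearMap.sum_apply, map_smul, LinearMap.smul_apply, smul_eq_mul]
  have h3 : ∀ p q, triM k T p q (∑ c, z c • w c) = ∑ c, z c * triM k T p q (w c) := by
    intro p q
    simp only [map_sum, map_smul, smul_eq_mul]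
  rw [h1]
  refine Finset.sum_congr rfl fun a _ => ?_
  rw [h2, Finset.mul_sum]
  refine Finset.sum_congr rfl fun b _ => ?_
  rw [h3, Finset.mul_sum, Finset.mul_sum]
  refine Finset.sum_congr rfl fun c _ => ?_
  ring

lemma iso_surj [IsAlgClosed k] {T : Fin n → Fin n → Fin n → k} (hT : TSym T) (d N : ℕ)
    (hN : 2 ^ (d + 1) - 2 ≤ N) (w : Fin N → Fin n → k)
    (hw : ∀ S : Fin N → Fin N → k, (∀ a b, S a b = S b a) →
      ∃ v, ∀ a b, triM k T (w a) (w b) v = S a b) :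
    ∃ u : Fin d → Fin n → k,
      (∀ y : Fin d → k, triM k T (∑ a, y a • u a) (∑ a, y a • u a) (∑ a, y a • u a) = 0) ∧
      ∀ S : Fin d → Fin d → k, (∀ a b, S a b = S b a) →
        ∃ v, ∀ a b, triM k T (u a) (u b) v = S a b := by
  let T' : Fin N → Fin N → Fin N → k := fun i j l => triM k T (w i) (w j) (w l)
  have hT' : TSym T' := ⟨fun i j l => hT.t12 _ _ _, fun i j l => hT.t23 _ _ _⟩
  have hpull : ∀ x y z : Fin N → k, triM k T' x y z =
      triM k T (∑ i, x i • w i) (∑ i, y i • w i) (∑ i, z i • w i) := by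
    intro x y z
    rw [triM_apply, triM_expand]
    refine Finset.sum_congr rfl fun a _ => Finset.sum_congr rfl fun b _ =>
      Finset.sum_congr rfl fun c _ => ?_
    simp only [T', Algebra.algebraMap_self, RingHom.id_apply]
    ring
  obtain ⟨U, -, hU, hz⟩ := iso_cubic (triM k T') hT'.t12 hT'.t23 d ⊤ (by
    rw [finrank_top, finrank_fin_fun]; exact hN)
  let b := finBasisOfFinrankEq k U hU
  have hα : LinearIndependent k (U.subtype ∘ b) := b.linearIndependent.map' U.subtype (Submodule.ker_subtype _)
  obtain ⟨β, hβ⟩ := li_inv _ hα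
  let α : Fin d → Fin N → k := fun a => (b a : Fin N → k)
  have hβ : ∀ a a', ∑ i, α a i * β i a' = if a = a' then 1 else 0 := hβ
  refine ⟨fun a => ∑ i, α a i • w i, ?_, ?_⟩
  · intro y
    have h1 : ∑ a, y a • ∑ i, α a i • w i = ∑ i, (∑ a, y a • α a) i • w i := by
      simp only [Finset.sum_apply, Pi.smul_apply, Finset.smul_sum, Finset.sum_smul, smul_eq_mul,
        mul_smul]
      exact Finset.sum_comm
    rw [h1, ← hpull]
    apply hz
    exact Submodule.sum_mem _ fun a _ => Submodule.smul_mem _ _ (b a).2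
  · intro S hS
    obtain ⟨v, hv⟩ := hw (fun i j => ∑ a, ∑ a', β i a * β j a' * S a a') (by
      intro i j
      rw [Finset.sum_comm]
      refine Finset.sum_congr rfl fun a _ => Finset.sum_congr rfl fun a' _ => ?_
      rw [hS]; ring)
    refine ⟨v, fun a a' => ?_⟩
    have h1 : ∀ p q, triM k T (∑ i, α a i • w i) p q = ∑ i, α a i * triM k T (w i) p q := by
      intro p q
      simp only [map_sum, LinearMap.sum_apply, map_smul, LinearMap.smul_apply, smul_eq_mul]
    have h1' : ∀ p q, triM k T p (∑ i, α a' i • w i) q = ∑ i, α a' i * triM k T p (w i) q := by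
      intro p q
      simp only [map_sum, LinearMap.sum_apply, map_smul, LinearMap.smul_apply, smul_eq_mul]
    have h2 : ∀ i, ∑ j, α a' j * ∑ c, ∑ c', β i c * β j c' * S c c' = ∑ c, β i c * S c a' := by
      intro i
      have : ∀ j, α a' j * ∑ c, ∑ c', β i c * β j c' * S c c' =
          ∑ c', (α a' j * β j c') * ∑ c, β i c * S c c' := by
        intro j
        rw [Finset.mul_sum]
        simp only [Finset.mul_sum]
        rw [Finset.sum_comm]
        refine Finset.sum_congr rfl fun c _ => Finset.sum_congr rfl fun c' _ => ?_
        ring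
      simp only [this]
      rw [Finset.sum_comm]
      simp only [← Finset.sum_mul, hβ]
      simp
    have h3 : ∀ i, α a i * ∑ c, β i c * S c a' = ∑ c, (α a i * β i c) * S c a' := by
      intro i
      rw [Finset.mul_sum]
      exact Finset.sum_congr rfl fun c _ => by ring
    have h4 : ∑ i, α a i * ∑ c, β i c * S c a' = S a a' := by
      simp only [h3]
      rw [Finset.sum_comm]
      simp only [← Finset.sum_mul, hβ]
      simp
    rw [h1, ← h4]
    refine Finset.sum_congr rfl fun i _ => ?_
    rw [h1', ← h2]
    simp only [hv]

lemma final_step [IsAlgClosed k] (h2 : (2 : k) ≠ 0) (h3 : (3 : k) ≠ 0)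
    {T : Fin n → Fin n → Fin n → k} (hT : TSym T) {f : MvPolynomial (Fin n) k}
    (hf : f = triM (MvPolynomial (Fin n) k) T X X X) (d : ℕ) (hd : d ≤ n)
    (u : Fin d → Fin n → k)
    (hu : ∀ y : Fin d → k, triM k T (∑ a, y a • u a) (∑ a, y a • u a) (∑ a, y a • u a) = 0)
    (hS : ∀ S : Fin d → Fin d → k, (∀ a b, S a b = S b a) →
        ∃ v, ∀ a b, triM k T (u a) (u b) v = S a b)
    (h : MvPolynomial (Fin d) k) (hh : h.IsHomogeneous 3) :
    ∃ g : MvPolynomial (Fin n) k,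
        InZariskiClosure (glOrbit f) g ∧ restrictVars d g = h := by
  have : Infinite k := IsAlgClosed.instInfinite
  obtain ⟨Th, hTh, hhT⟩ := tensor_exists h2 h3 h hh
  have hv : ∀ c, ∃ v, ∀ a b, triM k T (u a) (u b) v = Th a b c / 3 := fun c =>
    hS (fun a b => Th a b c / 3) (fun a b => by rw [hTh.1])
  choose v hv using hv
  let mk : (Fin d → Fin n → k) → Matrix (Fin n) (Fin n) k :=
    fun u i => if hi : (i : ℕ) < d then u ⟨i, hi⟩ else 0
  have hmk : ∀ (u : Fin d → Fin n → k) (x : Fin n → k), Matrix.vecMul x (mk u) =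
      ∑ a, x (Fin.castLE hd a) • u a := by
    intro u x
    rw [Matrix.vecMul_eq_sum]
    symm
    refine Finset.sum_of_injOn (Fin.castLE hd) ?_ (by simp) ?_ ?_
    · exact (Fin.castLE_injective hd).injOn
    · intro i _ hi
      have : ¬ (i : ℕ) < d := by
        intro hlt
        exact hi ⟨⟨i, hlt⟩, by simp, by ext; simp⟩
      simp [mk, this, Matrix.row]
    · intro a _
      simp [mk, Matrix.row]
  refine ⟨(pencil (mk u) (mk v) f).coeff 1, clos_coeff hf _ _ ?_, ?_⟩
  · apply MvPolynomial.funext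
    intro x
    rw [subst_eval hf, map_zero, hmk]
    exact hu _
  · apply MvPolynomial.funext
    intro y
    have e1 : ∀ g : MvPolynomial (Fin n) k, eval y (restrictVars d g) =
        eval (fun i : Fin n => if hi : (i : ℕ) < d then y ⟨i, hi⟩ else 0) g := by
      intro g
      rw [restrictVars, ← MvPolynomial.aeval_eq_eval, ← MvPolynomial.aeval_eq_eval]
      rw [← AlgHom.comp_apply, MvPolynomial.comp_aeval]
      congr 2
      ext i
      split_ifs <;> simp
    rw [e1, pencil_coeff hT hf, hmk, hmk, tri_eval hhT, triM_apply Th]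
    have e2 : ∀ a : Fin d, (if hi : ((Fin.castLE hd a : Fin n) : ℕ) < d then y ⟨Fin.castLE hd a, hi⟩ else 0) = y a := by
      intro a; simp
    simp only [e2]
    rw [triM_expand]
    simp only [Finset.mul_sum, hv]
    refine Finset.sum_congr rfl fun a _ => Finset.sum_congr rfl fun b _ =>
      Finset.sum_congr rfl fun c _ => ?_
    simp only [Algebra.algebraMap_self, RingHom.id_apply]
    field_simp

lemma numerics (d r N : ℕ) (hd : 1 ≤ d) (hN : N = 2 ^ (d + 1) - 2)
    (hineq : 2 * ((2 ^ d - 1) * (d ^ 2 * 2 ^ d + 2 * (d + 1) * d - 1) + d) ≤ xi r)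
    (hr : r ≤ N * N + N) : False := by
  obtain ⟨e, he⟩ : ∃ e, 2 ^ d = e + 2 := by
    refine ⟨2 ^ d - 2, ?_⟩
    have : 2 ^ 1 ≤ 2 ^ d := Nat.pow_le_pow_right (by norm_num) hd
    omega
  have hN' : N = 2 * (e + 1) := by rw [hN, pow_succ, he]; omega
  set Y := 2 * ((2 ^ d - 1) * (d ^ 2 * 2 ^ d + 2 * (d + 1) * d - 1) + d) with hY
  have h5 : 5 * N ≤ Y := by
    have h6 : 5 ≤ d ^ 2 * 2 ^ d + 2 * (d + 1) * d - 1 := by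
      have : 1 ≤ d ^ 2 := Nat.one_le_pow _ _ hd
      have : 1 * 2 ≤ d ^ 2 * 2 ^ d := Nat.mul_le_mul this (by omega)
      have : 2 * (1 + 1) * 1 ≤ 2 * (d + 1) * d := by gcongr
      omega
    have h7 : 2 ^ d - 1 = e + 1 := by omega
    rw [h7] at hY
    have : (e + 1) * 5 ≤ (e + 1) * (d ^ 2 * 2 ^ d + 2 * (d + 1) * d - 1) := by gcongr
    omega
  have h8 : (Y : ℝ) ≤ (Real.sqrt (8 * r + 17) - 3) / 2 := by
    have hpos : 0 < Y := by omega
    exact (Nat.le_floor_iff' hpos.ne').1 hineq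
  have h9 : (2 * Y + 3 : ℝ) ≤ Real.sqrt (8 * r + 17) := by linarith
  have h10 : (2 * Y + 3 : ℝ) ^ 2 ≤ 8 * r + 17 := by
    rw [← Real.le_sqrt' (by positivity)]; exact h9
  have h11 : (2 * Y + 3) ^ 2 ≤ 8 * r + 17 := by exact_mod_cast h10
  have h12 : 2 ≤ N := by omega
  nlinarith

end Final

/-- Quantitative surjectivity of orbit closures: if `f ∈ P₃(kⁿ)` has q-rank `r` and
`d ≤ n` satisfies `2((2^d - 1)(d² 2^d + 2(d+1)d - 1) + d) ≤ ξ(r)`, then the Zariski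
closure of the `GLₙ(k)`-orbit of `f` surjects onto `P₃(k^d)`. -/
theorem orbit_closure_surjects {k : Type*} [Field k] [IsAlgClosed k]
    (h2 : (2 : k) ≠ 0) (h3 : (3 : k) ≠ 0) {n : ℕ}
    (f : MvPolynomial (Fin n) k) (hf : f.IsHomogeneous 3)
    (r : ℕ) (hr : polyQRank f = (r : ℕ∞))
    (d : ℕ) (hdn : d ≤ n)
    (hineq : 2 * ((2 ^ d - 1) * (d ^ 2 * 2 ^ d + 2 * (d + 1) * d - 1) + d) ≤ xi r) :
    ∀ h : MvPolynomial (Fin d) k, h.IsHomogeneous 3 →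
      ∃ g : MvPolynomial (Fin n) k,
        InZariskiClosure (glOrbit f) g ∧ restrictVars d g = h := by
  intro h hh
  have : Infinite k := IsAlgClosed.instInfinite
  obtain ⟨T, hT, hfT⟩ := tensor_exists h2 h3 f hf
  have key : ∃ w : Fin (2 ^ (d + 1) - 2) → Fin n → k,
      ∀ S : Fin (2 ^ (d + 1) - 2) → Fin (2 ^ (d + 1) - 2) → k,
      (∀ a b, S a b = S b a) → ∃ v, ∀ a b, triM k T (w a) (w b) v = S a b := by
    rcases Nat.eq_zero_or_pos d with hd | hd
    · subst hd
      exact ⟨fun _ => 0, fun S _ => ⟨0, fun a => a.elim0⟩⟩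
    · rcases generic_surj h2 (2 ^ (d + 1) - 2) hT hfT with h1 | h1
      · exact h1
      · rw [hr] at h1
        exact (numerics d r _ hd rfl hineq (by exact_mod_cast h1)).elim
  obtain ⟨w, hw⟩ := key
  obtain ⟨u, hu, hS⟩ := iso_surj hT d _ le_rfl w hw
  exact final_step h2 h3 hT hfT d hdn u hu hS h hh
end
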